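/- arXiv:2605.22173 — 2 statements merged into one kernel-verified Lean document; each statement's English description precedes it below -/
import Mathlib

section
/- Let q be a prime power, F a finite field with q elements, d ≥ 3 an integer, S ⊆ {1,…,d−1} with |S| ≥ 2, let τ be a face of the projected flags complex B(d,S,q) with |S| − |τ| ≥ 2, and let i ≠ j be two elements of S that are not dimensions of members of τ. Sample a uniformly random maximal face T of B(d,S,q) with τ ⊆ T, let U_i and U_j be the elements of T of dimensions i and j respectively, and let π₀ pick U_i or U_j with probability 1/2 each. Then every f from {W : dim(W) ∈ {i,j} and τ ∪ {W} is a chain} to ℝ with E_{π₀}[f] = 0 satisfies E_T[f(U_i)·f(U_j)] ≤ (1/√q)·E_{π₀}[f²]. In other words, B(d,S,q) is a (1/√q)-product. -/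
open Finset
open scoped Classical

noncomputable instance (F : Type) [Field F] [Fintype F] (n : ℕ) :
    Fintype (Submodule F (Fin n → F)) :=
  Fintype.ofInjective (fun W => (W : Set (Fin n → F)))
    fun _ _ h => SetLike.coe_injective h

/-- A face of the projected flags complex `B(n,S,q)`: a finite chain of subspaces of `F^n`
whose dimensions all lie in `S`. -/
def IsFlagFace (F : Type) [Field F] [Fintype F] (n : ℕ) (S : Finset ℕ)
    (s : Finset (Submodule F (Fin n → F))) : Prop :=
  IsChain (· ≤ ·) (s : Set (Submodule F (Fin n → F))) ∧
    ∀ W ∈ s, Module.finrank F W ∈ S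

/-- A maximal face of `B(n,S,q)`: a chain containing one subspace of each dimension in `S`. -/
def IsMaxFlagFace (F : Type) [Field F] [Fintype F] (n : ℕ) (S : Finset ℕ)
    (T : Finset (Submodule F (Fin n → F))) : Prop :=
  IsFlagFace F n S T ∧ ∀ i ∈ S, ∃ W ∈ T, Module.finrank F W = i

/-- The maximal faces of `B(n,S,q)` containing a given face `τ`. -/
noncomputable def maxFacesAbove (F : Type) [Field F] [Fintype F] (n : ℕ) (S : Finset ℕ)
    (τ : Finset (Submodule F (Fin n → F))) : Finset (Finset (Submodule F (Fin n → F))) :=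
  Finset.univ.filter fun T => IsMaxFlagFace F n S T ∧ τ ⊆ T

/-- `E_{π₀}[f]` where one samples a uniform maximal face `T ⊇ τ` and `π₀` picks the element
of `T` of dimension `i` or the one of dimension `j`, with probability `1/2` each. -/
noncomputable def twoColorExp (F : Type) [Field F] [Fintype F] (n : ℕ) (S : Finset ℕ)
    (τ : Finset (Submodule F (Fin n → F))) (i j : ℕ)
    (f : Submodule F (Fin n → F) → ℝ) : ℝ :=
  (∑ T ∈ maxFacesAbove F n S τ,
      ((∑ W ∈ T.filter (fun W : Submodule F (Fin n → F) => Module.finrank F W = i), f W) +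
        (∑ W ∈ T.filter (fun W : Submodule F (Fin n → F) => Module.finrank F W = j), f W)) / 2) /
    ((maxFacesAbove F n S τ).card : ℝ)

/-- `E_T[f(U_i)·g(U_j)]` where `T` is a uniform maximal face containing `τ` and `U_i`, `U_j`
are its elements of dimensions `i` and `j`. -/
noncomputable def twoColorPairExp (F : Type) [Field F] [Fintype F] (n : ℕ) (S : Finset ℕ)
    (τ : Finset (Submodule F (Fin n → F))) (i j : ℕ)
    (f g : Submodule F (Fin n → F) → ℝ) : ℝ :=
  (∑ T ∈ maxFacesAbove F n S τ,
      (∑ W ∈ T.filter (fun W : Submodule F (Fin n → F) => Module.finrank F W = i), f W) *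
        (∑ W ∈ T.filter (fun W : Submodule F (Fin n → F) => Module.finrank F W = j), g W)) /
    ((maxFacesAbove F n S τ).card : ℝ)

/-!
If `τ` has a member of dimension between `i` and `j`, the bipartite graph of the link is complete.
Otherwise it is the graph of inclusions between the subspaces of dimensions `i` and `j` of an
interval `[A, B]`. For `j = i + 1` its second singular value is bounded by induction on `i`: on
functions of mean zero, going up one dimension and back differs from going down and back by an
explicit scalar, and passing to the adjoint brings the latter to the preceding level. Each further
one-step walk upwards is a contraction preserving mean zero, and the composed walk is, up to a
scalar, the inclusion graph between dimensions `i` and `j`, so the same bound holds for every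
`j > i`. Finally, the linear group acts transitively on flags of a given type, so all edges of the
link of `τ` lie in equally many maximal faces and averages over maximal faces are averages over
edges.
-/

section BipartiteGraph

open scoped BigOperators

variable {α β γ : Type*} {R : α → β → Prop} {X : Finset α} {Y : Finset β} {Z : Finset γ}
  {r c C ε : ℝ}

/-- The adjacency operator of the bipartite graph `R` with left side `X`: it maps a function `f`
on `X` to the function on the right side whose value at `y` is the sum of `f` over the
neighbours of `y`. -/
noncomputable def adjSum (R : α → β → Prop) (X : Finset α) (f : α → ℝ) (y : β) : ℝ :=
  ∑ x ∈ X.bipartiteBelow R y, f x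

/-- The bipartite graph `R` between `X` and `Y` is biregular, of degree `r` on `X` and `c` on `Y`.
The degrees are real numbers because those of a composed graph are computed as quotients; their
signs are recorded to cover the graphs in which one side is empty. -/
structure IsBiregular (R : α → β → Prop) (X : Finset α) (Y : Finset β) (r c : ℝ) : Prop where
  left_nonneg : 0 ≤ r
  right_nonneg : 0 ≤ c
  card_above : ∀ x ∈ X, (#(Y.bipartiteAbove R x) : ℝ) = r
  card_below : ∀ y ∈ Y, (#(X.bipartiteBelow R y) : ℝ) = c

/-- The adjacency operator of `R` has squared norm at most `C` on functions on `X` of mean zero. -/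
def MeanZeroBound (R : α → β → Prop) (X : Finset α) (Y : Finset β) (C : ℝ) : Prop :=
  ∀ f : α → ℝ, ∑ x ∈ X, f x = 0 → ∑ y ∈ Y, adjSum R X f y ^ 2 ≤ C * ∑ x ∈ X, f x ^ 2

/-- The bipartite graph `R` is biregular and the square of its normalized second singular value is
at most `ε`. -/
def IsExpander (R : α → β → Prop) (X : Finset α) (Y : Finset β) (ε : ℝ) : Prop :=
  ∃ r c : ℝ, IsBiregular R X Y r c ∧ MeanZeroBound R X Y (ε * (r * c))

lemma adjSum_swap (R : α → β → Prop) (Y : Finset β) (g : β → ℝ) (x : α) :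
    adjSum (Function.swap R) Y g x = ∑ y ∈ Y.bipartiteAbove R x, g y :=
  rfl

lemma sum_mul_adjSum_swap (R : α → β → Prop) (X : Finset α) (Y : Finset β)
    (f : α → ℝ) (g : β → ℝ) :
    ∑ x ∈ X, f x * adjSum (Function.swap R) Y g x = ∑ y ∈ Y, adjSum R X f y * g y := by
  simp only [adjSum, mul_sum, sum_mul]
  exact sum_sum_bipartiteAbove_eq_sum_sum_bipartiteBelow R fun x y => f x * g y

lemma IsBiregular.swap (h : IsBiregular R X Y r c) : IsBiregular (Function.swap R) Y X c r :=
  ⟨h.right_nonneg, h.left_nonneg, h.card_below, h.card_above⟩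

lemma IsBiregular.sum_adjSum (h : IsBiregular R X Y r c) (f : α → ℝ) :
    ∑ y ∈ Y, adjSum R X f y = r * ∑ x ∈ X, f x := by
  have hcount := sum_mul_adjSum_swap R X Y f 1
  simp only [Pi.one_apply, mul_one] at hcount
  rw [← hcount, mul_sum]
  refine sum_congr rfl fun x hx => ?_
  simp [adjSum_swap, h.card_above x hx, mul_comm]

lemma IsBiregular.sum_adjSum_sq_le (h : IsBiregular R X Y r c) (f : α → ℝ) :
    ∑ y ∈ Y, adjSum R X f y ^ 2 ≤ r * c * ∑ x ∈ X, f x ^ 2 :=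
  calc ∑ y ∈ Y, adjSum R X f y ^ 2 ≤ ∑ y ∈ Y, c * adjSum R X (f ^ 2) y :=
        sum_le_sum fun y hy => h.card_below y hy ▸ sq_sum_le_card_mul_sum_sq
    _ = r * c * ∑ x ∈ X, f x ^ 2 := by
        rw [← mul_sum, h.sum_adjSum]
        simp only [Pi.pow_apply]
        ring

lemma sq_sum_mul_adjSum_le (f : α → ℝ) (g : β → ℝ)
    (hf : ∑ y ∈ Y, adjSum R X f y ^ 2 ≤ C * ∑ x ∈ X, f x ^ 2) :
    (∑ y ∈ Y, adjSum R X f y * g y) ^ 2 ≤ C * (∑ x ∈ X, f x ^ 2) * ∑ y ∈ Y, g y ^ 2 :=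
  (sum_mul_sq_le_sq_mul_sq _ _ _).trans <|
    mul_le_mul_of_nonneg_right hf (sum_nonneg fun _ _ => sq_nonneg _)

lemma MeanZeroBound.swap (h : MeanZeroBound R X Y C) (hR : IsBiregular R X Y r c) (hC : 0 ≤ C) :
    MeanZeroBound (Function.swap R) Y X C := by
  intro g hg
  set u := adjSum (Function.swap R) Y g
  have hu : ∑ x ∈ X, u x = 0 := by rw [hR.swap.sum_adjSum, hg, mul_zero]
  have hnorm : ∑ x ∈ X, u x ^ 2 = ∑ y ∈ Y, adjSum R X u y * g y := by
    simp only [← sum_mul_adjSum_swap, sq, u]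
  have hsq := sq_sum_mul_adjSum_le u g (h u hu)
  rw [← hnorm] at hsq
  have hg0 : 0 ≤ ∑ y ∈ Y, g y ^ 2 := sum_nonneg fun _ _ => sq_nonneg _
  rcases (sum_nonneg fun x _ => sq_nonneg (u x) : 0 ≤ ∑ x ∈ X, u x ^ 2).eq_or_lt with h0 | hpos
  · exact h0 ▸ mul_nonneg hC hg0
  · nlinarith

lemma adjSum_adjSum (R₁ : α → β → Prop) (R₂ : β → γ → Prop) (X : Finset α) (Y : Finset β)
    (f : α → ℝ) (z : γ) :
    adjSum R₂ Y (adjSum R₁ X f) z = ∑ x ∈ X, #{y ∈ Y | R₁ x y ∧ R₂ y z} * f x := by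
  have hcount (x : α) : #{y ∈ Y | R₁ x y ∧ R₂ y z} * f x =
      ∑ _y ∈ (Y.bipartiteBelow R₂ z).bipartiteAbove R₁ x, f x := by
    simp only [sum_const, nsmul_eq_mul, bipartiteAbove, bipartiteBelow, filter_filter, and_comm]
  simp only [hcount, adjSum, sum_sum_bipartiteAbove_eq_sum_sum_bipartiteBelow]

lemma sum_adjSum_sq (R : α → β → Prop) (X : Finset α) (Y : Finset β) (f : α → ℝ) :
    ∑ y ∈ Y, adjSum R X f y ^ 2 =
      ∑ x ∈ X, ∑ x' ∈ X, #{y ∈ Y | R x y ∧ R x' y} * (f x * f x') := by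
  calc ∑ y ∈ Y, adjSum R X f y ^ 2
      = ∑ x ∈ X, f x * adjSum (Function.swap R) Y (adjSum R X f) x := by
        simp only [sum_mul_adjSum_swap, sq]
    _ = _ := by
        simp only [adjSum_adjSum, mul_sum, Function.swap, and_comm, mul_left_comm]

lemma sum_adjSum_sq_of_codegree_eq {R' : α → γ → Prop} {r' : ℝ}
    (hr : ∀ x ∈ X, (#(Y.bipartiteAbove R x) : ℝ) = r)
    (hr' : ∀ x ∈ X, (#(Z.bipartiteAbove R' x) : ℝ) = r')
    (hcodegree : ∀ x ∈ X, ∀ x' ∈ X, x ≠ x' →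
      #{y ∈ Y | R x y ∧ R x' y} = #{z ∈ Z | R' x z ∧ R' x' z}) (f : α → ℝ) :
    ∑ y ∈ Y, adjSum R X f y ^ 2 =
      ∑ z ∈ Z, adjSum R' X f z ^ 2 + (r - r') * ∑ x ∈ X, f x ^ 2 := by
  have hcod (x : α) (hx : x ∈ X) (x' : α) (hx' : x' ∈ X) :
      (#{y ∈ Y | R x y ∧ R x' y} : ℝ) =
        #{z ∈ Z | R' x z ∧ R' x' z} + if x = x' then r - r' else 0 := by
    split_ifs with heq
    · subst heq
      have hrx := hr x hx
      have hrx' := hr' x hx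
      simp only [bipartiteAbove] at hrx hrx'
      simp only [and_self]
      linarith
    · rw [hcodegree x hx x' hx' heq, add_zero]
  have hdiag : ∑ x ∈ X, ∑ x' ∈ X, (if x = x' then r - r' else 0) * (f x * f x') =
      (r - r') * ∑ x ∈ X, f x ^ 2 := by
    rw [mul_sum]
    exact sum_congr rfl fun x hx => by simp [ite_mul, hx, sq]
  rw [sum_adjSum_sq, sum_adjSum_sq, ← hdiag, ← sum_add_distrib]
  refine sum_congr rfl fun x hx => ?_
  rw [← sum_add_distrib]
  exact sum_congr rfl fun x' hx' => by rw [hcod x hx x' hx', add_mul]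

section Composition

variable {R₁ : α → β → Prop} {R₂ : β → γ → Prop} {R₃ : α → γ → Prop} {p : ℕ} {r₁ c₁ r₂ c₂ : ℝ}

lemma sum_card_paths (R₁ : α → β → Prop) (R₂ : β → γ → Prop) (Y : Finset β) (Z : Finset γ)
    (x : α) :
    ∑ z ∈ Z, #{y ∈ Y | R₁ x y ∧ R₂ y z} =
      ∑ y ∈ Y.bipartiteAbove R₁ x, #(Z.bipartiteAbove R₂ y) := by
  rw [sum_card_bipartiteAbove_eq_sum_card_bipartiteBelow]
  simp only [bipartiteAbove, bipartiteBelow, filter_filter]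

lemma card_above_of_card_paths (hp : 0 < p)
    (hr₁ : ∀ x ∈ X, (#(Y.bipartiteAbove R₁ x) : ℝ) = r₁)
    (hr₂ : ∀ y ∈ Y, (#(Z.bipartiteAbove R₂ y) : ℝ) = r₂)
    (hpaths : ∀ x ∈ X, ∀ z ∈ Z, #{y ∈ Y | R₁ x y ∧ R₂ y z} = if R₃ x z then p else 0) :
    ∀ x ∈ X, (#(Z.bipartiteAbove R₃ x) : ℝ) = r₁ * r₂ / p := by
  intro x hx
  have hcount : #(Z.bipartiteAbove R₃ x) * (p : ℝ) =
      ∑ y ∈ Y.bipartiteAbove R₁ x, (#(Z.bipartiteAbove R₂ y) : ℝ) := by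
    rw [← Nat.cast_sum, ← sum_card_paths, sum_congr rfl (hpaths x hx), ← sum_filter]
    simp [bipartiteAbove]
  rw [eq_div_iff (by positivity), hcount,
    sum_congr rfl fun y hy => hr₂ y ((mem_bipartiteAbove R₁).1 hy).1, sum_const, nsmul_eq_mul,
    hr₁ x hx]

lemma IsBiregular.comp (h₁ : IsBiregular R₁ X Y r₁ c₁) (h₂ : IsBiregular R₂ Y Z r₂ c₂)
    (hp : 0 < p)
    (hpaths : ∀ x ∈ X, ∀ z ∈ Z, #{y ∈ Y | R₁ x y ∧ R₂ y z} = if R₃ x z then p else 0) :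
    IsBiregular R₃ X Z (r₁ * r₂ / p) (c₁ * c₂ / p) where
  left_nonneg := div_nonneg (mul_nonneg h₁.left_nonneg h₂.left_nonneg) p.cast_nonneg
  right_nonneg := div_nonneg (mul_nonneg h₁.right_nonneg h₂.right_nonneg) p.cast_nonneg
  card_above := card_above_of_card_paths hp h₁.card_above h₂.card_above hpaths
  card_below := by
    rw [mul_comm c₁]
    exact card_above_of_card_paths (R₃ := Function.swap R₃) hp h₂.card_below h₁.card_below
      fun z hz x hx => by simpa only [Function.swap, and_comm] using hpaths x hx z hz

lemma IsExpander.comp (h₁ : IsExpander R₁ X Y ε) (h₂ : IsBiregular R₂ Y Z r₂ c₂) (hp : 0 < p)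
    (hpaths : ∀ x ∈ X, ∀ z ∈ Z, #{y ∈ Y | R₁ x y ∧ R₂ y z} = if R₃ x z then p else 0) :
    IsExpander R₃ X Z ε := by
  obtain ⟨r₁, c₁, hreg₁, hbound₁⟩ := h₁
  refine ⟨_, _, hreg₁.comp h₂ hp hpaths, fun f hf => ?_⟩
  have hcomp (z : γ) (hz : z ∈ Z) : adjSum R₂ Y (adjSum R₁ X f) z = p * adjSum R₃ X f z := by
    rw [adjSum_adjSum, adjSum, bipartiteBelow, sum_filter, mul_sum]
    refine sum_congr rfl fun x hx => ?_
    rw [hpaths x hx z hz]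
    split_ifs <;> simp
  have hpsq : (p : ℝ) ^ 2 * ∑ z ∈ Z, adjSum R₃ X f z ^ 2 ≤
      r₂ * c₂ * (ε * (r₁ * c₁) * ∑ x ∈ X, f x ^ 2) :=
    calc (p : ℝ) ^ 2 * ∑ z ∈ Z, adjSum R₃ X f z ^ 2
        = ∑ z ∈ Z, adjSum R₂ Y (adjSum R₁ X f) z ^ 2 := by
          rw [mul_sum]
          exact sum_congr rfl fun z hz => by rw [hcomp z hz, mul_pow]
      _ ≤ r₂ * c₂ * ∑ y ∈ Y, adjSum R₁ X f y ^ 2 := h₂.sum_adjSum_sq_le _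
      _ ≤ _ := mul_le_mul_of_nonneg_left (hbound₁ f hf)
          (mul_nonneg h₂.left_nonneg h₂.right_nonneg)
  calc ∑ z ∈ Z, adjSum R₃ X f z ^ 2
      ≤ r₂ * c₂ * (ε * (r₁ * c₁) * ∑ x ∈ X, f x ^ 2) / p ^ 2 := by
        rwa [le_div_iff₀ (by positivity), mul_comm]
    _ = ε * (r₁ * r₂ / p * (c₁ * c₂ / p)) * ∑ x ∈ X, f x ^ 2 := by
        field_simp

end Composition

lemma IsExpander.of_complete (hR : ∀ x ∈ X, ∀ y ∈ Y, R x y) (hε : 0 ≤ ε) : IsExpander R X Y ε := by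
  have habove (x : α) (hx : x ∈ X) : Y.bipartiteAbove R x = Y :=
    filter_true_of_mem fun y hy => hR x hx y hy
  have hbelow (y : β) (hy : y ∈ Y) : X.bipartiteBelow R y = X :=
    filter_true_of_mem fun x hx => hR x hx y hy
  refine ⟨#Y, #X, ⟨Nat.cast_nonneg _, Nat.cast_nonneg _, fun x hx => by rw [habove x hx],
    fun y hy => by rw [hbelow y hy]⟩, fun f hf => ?_⟩
  rw [sum_eq_zero fun y hy => by rw [adjSum, hbelow y hy, hf, sq, zero_mul]]
  positivity

lemma IsBiregular.sum_above_mul (h : IsBiregular R X Y r c) (f : α → ℝ) (g : β → ℝ) (a : ℝ) :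
    ∑ x ∈ X, ∑ y ∈ Y.bipartiteAbove R x, f x * g y =
      ∑ y ∈ Y, adjSum R X (fun x => f x - a) y * g y + a * (c * ∑ y ∈ Y, g y) := by
  rw [← sum_mul_adjSum_swap, ← h.swap.sum_adjSum g, mul_sum, ← sum_add_distrib]
  refine sum_congr rfl fun x _ => ?_
  rw [← mul_sum, adjSum_swap]
  ring

lemma IsBiregular.sum_above_add (h : IsBiregular R X Y r c) (f : α → ℝ) (g : β → ℝ) :
    ∑ x ∈ X, ∑ y ∈ Y.bipartiteAbove R x, (f x + g y) =
      r * ∑ x ∈ X, f x + c * ∑ y ∈ Y, g y := by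
  simp only [sum_add_distrib, sum_const, nsmul_eq_mul]
  rw [← h.swap.sum_adjSum, mul_sum]
  exact congrArg₂ _ (sum_congr rfl fun x hx => by rw [h.card_above x hx]) rfl

lemma sum_sub_expect (X : Finset α) (f : α → ℝ) : ∑ x ∈ X, (f x - 𝔼 x' ∈ X, f x') = 0 := by
  rw [sum_sub_distrib, sum_const, nsmul_eq_mul, card_mul_expect, sub_self]

lemma sum_sub_expect_sq (X : Finset α) (f : α → ℝ) :
    ∑ x ∈ X, (f x - 𝔼 x' ∈ X, f x') ^ 2 =
      ∑ x ∈ X, f x ^ 2 - (𝔼 x ∈ X, f x) * ∑ x ∈ X, f x := by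
  have hcentre := sum_sub_expect X f
  set a := 𝔼 x ∈ X, f x
  calc ∑ x ∈ X, (f x - a) ^ 2 = ∑ x ∈ X, (f x ^ 2 - a * f x - a * (f x - a)) :=
        sum_congr rfl fun x _ => by ring
    _ = ∑ x ∈ X, f x ^ 2 - a * ∑ x ∈ X, f x := by
        rw [sum_sub_distrib, sum_sub_distrib, ← mul_sum, ← mul_sum, hcentre, mul_zero, sub_zero]

lemma mul_sum_nonneg_expect (X : Finset α) (f : α → ℝ) :
    0 ≤ (𝔼 x ∈ X, f x) * ∑ x ∈ X, f x := by
  rw [← card_mul_expect]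
  nlinarith [mul_nonneg (Nat.cast_nonneg (α := ℝ) #X) (sq_nonneg (𝔼 x ∈ X, f x))]

/- Only the left function has to be centred: the joint mean of `f` and `g` being zero makes the
contribution of the mean of `f` nonpositive. -/
lemma IsExpander.sum_above_mul_le (h : IsExpander R X Y ε) (hε : 0 ≤ ε) (f : α → ℝ) (g : β → ℝ)
    (hmean : ∑ x ∈ X, ∑ y ∈ Y.bipartiteAbove R x, (f x + g y) = 0) :
    ∑ x ∈ X, ∑ y ∈ Y.bipartiteAbove R x, f x * g y ≤
      √ε * ((∑ x ∈ X, ∑ y ∈ Y.bipartiteAbove R x, (f x ^ 2 + g y ^ 2)) / 2) := by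
  obtain ⟨r, c, hreg, hbound⟩ := h
  set a := 𝔼 x ∈ X, f x
  set E := ∑ x ∈ X, (f x - a) ^ 2
  set G := ∑ y ∈ Y, g y ^ 2
  set P := ∑ y ∈ Y, adjSum R X (fun x => f x - a) y * g y
  have hr := hreg.left_nonneg
  have hc := hreg.right_nonneg
  have hE : E ≤ ∑ x ∈ X, f x ^ 2 := by
    linarith [sum_sub_expect_sq X f, mul_sum_nonneg_expect X f]
  have hE0 : 0 ≤ E := sum_nonneg fun _ _ => sq_nonneg _
  have hG0 : 0 ≤ G := sum_nonneg fun _ _ => sq_nonneg _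
  have hPsq : P ^ 2 ≤ ε * ((r * E) * (c * G)) := by
    have := sq_sum_mul_adjSum_le _ g (hbound _ (sum_sub_expect X f))
    linarith
  have hP : P ≤ √ε * ((r * E + c * G) / 2) := by
    refine le_of_abs_le (abs_le_of_sq_le_sq ?_ (by positivity))
    rw [mul_pow, Real.sq_sqrt hε]
    refine hPsq.trans (mul_le_mul_of_nonneg_left ?_ hε)
    nlinarith [sq_nonneg (r * E - c * G)]
  rw [hreg.sum_above_add] at hmean
  rw [hreg.sum_above_mul f g a, hreg.sum_above_add,
    show c * ∑ y ∈ Y, g y = -(r * ∑ x ∈ X, f x) by linarith]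
  calc P + a * -(r * ∑ x ∈ X, f x) = P - r * (a * ∑ x ∈ X, f x) := by ring
    _ ≤ P := sub_le_self _ (mul_nonneg hr (mul_sum_nonneg_expect X f))
    _ ≤ √ε * ((r * E + c * G) / 2) := hP
    _ ≤ √ε * ((r * ∑ x ∈ X, f x ^ 2 + c * G) / 2) := by gcongr

end BipartiteGraph

section Intervals

variable {F V : Type*} [Field F] [AddCommGroup V] [Module F V] [Fintype (Submodule F V)]
  {A B U U' W : Submodule F V} {k : ℕ}

/-- The `q`-analogue `[n]_q = 1 + q + ⋯ + q ^ (n - 1)` of `n`; it counts the lines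
of an `n`-dimensional vector space over a field with `q` elements. -/
def qInt (q n : ℕ) : ℕ := ∑ i ∈ range n, q ^ i

lemma qInt_succ (q n : ℕ) : qInt q (n + 1) = q * qInt q n + 1 :=
  geom_sum_succ

lemma qInt_pos (q : ℕ) {n : ℕ} (hn : 0 < n) : 0 < qInt q n := by
  obtain ⟨m, rfl⟩ := Nat.exists_eq_add_one_of_ne_zero hn.ne'
  rw [qInt_succ]
  exact Nat.succ_pos _

/-- The elements of dimension `k` of the interval `[A, B]` of the lattice of subspaces. -/
noncomputable def subspacesBetween (A B : Submodule F V) (k : ℕ) : Finset (Submodule F V) :=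
  {W | A ≤ W ∧ W ≤ B ∧ Module.finrank F W = k}

lemma mem_subspacesBetween :
    W ∈ subspacesBetween A B k ↔ A ≤ W ∧ W ≤ B ∧ Module.finrank F W = k := by
  simp [subspacesBetween]

lemma filter_le_subspacesBetween (hU : A ≤ U) :
    {W ∈ subspacesBetween A B k | U ≤ W} = subspacesBetween U B k := by
  ext W
  simp only [mem_filter, mem_subspacesBetween]
  exact ⟨fun h => ⟨h.2, h.1.2⟩, fun h => ⟨⟨hU.trans h.1, h.2⟩, h.1⟩⟩

lemma filter_ge_subspacesBetween (hU : U ≤ B) :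
    {W ∈ subspacesBetween A B k | W ≤ U} = subspacesBetween A U k := by
  ext W
  simp only [mem_filter, mem_subspacesBetween]
  exact ⟨fun h => ⟨h.1.1, h.2, h.1.2.2⟩, fun h => ⟨⟨h.1, h.2.1.trans hU, h.2.2⟩, h.2.1⟩⟩

variable [FiniteDimensional F V]

lemma subspacesBetween_finrank_left (hAB : A ≤ B) :
    subspacesBetween A B (Module.finrank F A) = {A} := by
  ext W
  simp only [mem_subspacesBetween, mem_singleton]
  constructor
  · rintro ⟨hAW, -, hW⟩
    exact (Submodule.eq_of_le_of_finrank_eq hAW hW.symm).symm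
  · rintro rfl
    exact ⟨le_rfl, hAB, rfl⟩

lemma subspacesBetween_finrank_right (hAB : A ≤ B) :
    subspacesBetween A B (Module.finrank F B) = {B} := by
  ext W
  simp only [mem_subspacesBetween, mem_singleton]
  constructor
  · rintro ⟨-, hWB, hW⟩
    exact Submodule.eq_of_le_of_finrank_eq hWB hW
  · rintro rfl
    exact ⟨hAB, le_rfl, rfl⟩

lemma subspacesBetween_eq_empty_of_lt_finrank (hk : k < Module.finrank F A) :
    subspacesBetween A B k = ∅ := by
  refine eq_empty_of_forall_notMem fun W hW => hk.not_ge ?_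
  obtain ⟨hAW, -, rfl⟩ := mem_subspacesBetween.1 hW
  exact Submodule.finrank_mono hAW

lemma subspacesBetween_eq_empty_of_finrank_lt (hk : Module.finrank F B < k) :
    subspacesBetween A B k = ∅ := by
  refine eq_empty_of_forall_notMem fun W hW => hk.not_ge ?_
  obtain ⟨-, hWB, rfl⟩ := mem_subspacesBetween.1 hW
  exact Submodule.finrank_mono hWB

omit [Fintype (Submodule F V)] in
lemma finrank_lt_finrank_sup (hfin : Module.finrank F U = Module.finrank F U') (hne : U ≠ U') :
    Module.finrank F U < Module.finrank F (U ⊔ U' : Submodule F V) := by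
  refine Submodule.finrank_lt_finrank_of_lt (left_lt_sup.2 fun hle => hne ?_)
  exact (Submodule.eq_of_le_of_finrank_eq hle hfin.symm).symm

lemma codegree_subspacesBetween (hU : U ∈ subspacesBetween A B (k + 1))
    (hU' : U' ∈ subspacesBetween A B (k + 1)) (hne : U ≠ U') :
    #{W ∈ subspacesBetween A B (k + 2) | U ≤ W ∧ U' ≤ W} =
      #{W ∈ subspacesBetween A B k | W ≤ U ∧ W ≤ U'} := by
  obtain ⟨hAU, hUB, hUk⟩ := mem_subspacesBetween.1 hU
  obtain ⟨hAU', hUB', hUk'⟩ := mem_subspacesBetween.1 hU'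
  simp only [← sup_le_iff, ← le_inf_iff]
  rw [filter_le_subspacesBetween (hAU.trans le_sup_left),
    filter_ge_subspacesBetween (inf_le_left.trans hUB)]
  have hlt := finrank_lt_finrank_sup (hUk.trans hUk'.symm) hne
  have hadd := Submodule.finrank_sup_add_finrank_inf_eq U U'
  rcases (show k + 2 ≤ Module.finrank F (U ⊔ U' : Submodule F V) by lia).eq_or_lt with heq | hgt
  · rw [heq, subspacesBetween_finrank_left (sup_le hUB hUB'),
      show k = Module.finrank F (U ⊓ U' : Submodule F V) by lia,
      subspacesBetween_finrank_right (le_inf hAU hAU'), card_singleton, card_singleton]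
  · rw [subspacesBetween_eq_empty_of_lt_finrank hgt,
      subspacesBetween_eq_empty_of_finrank_lt (by lia)]

end Intervals

section PointCount

variable {F V : Type*} [Field F] [AddCommGroup V] [Module F V] [FiniteDimensional F V]
  {A B U W : Submodule F V} {k : ℕ}

lemma sup_span_singleton_eq_iff {v : V} (hAW : A ≤ W)
    (hfin : Module.finrank F W = Module.finrank F A + 1) (hv : v ∉ A) :
    A ⊔ F ∙ v = W ↔ v ∈ W := by
  refine ⟨fun h => h ▸ Submodule.mem_sup_right (Submodule.mem_span_singleton_self v), fun h => ?_⟩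
  refine Submodule.eq_of_le_of_finrank_eq (sup_le hAW ?_) ?_
  · rwa [Submodule.span_singleton_le_iff_mem]
  · rw [Submodule.finrank_sup_span_singleton hv, hfin]

variable [Finite F]

lemma ncard_sdiff_add_pow_finrank (hAB : A ≤ B) :
    ((B : Set V) \ A).ncard + Nat.card F ^ Module.finrank F A =
      Nat.card F ^ Module.finrank F B := by
  have := Module.finite_of_finite F (M := V)
  rw [← Module.natCard_eq_pow_finrank, ← Module.natCard_eq_pow_finrank]
  exact Set.ncard_sdiff_add_ncard_of_subset hAB

variable [Fintype (Submodule F V)]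

lemma ncard_sdiff_eq_sum (hAB : A ≤ B) :
    ((B : Set V) \ A).ncard =
      ∑ W ∈ subspacesBetween A B (Module.finrank F A + 1), ((W : Set V) \ A).ncard := by
  have := Module.finite_of_finite F (M := V)
  have := Fintype.ofFinite V
  have hmaps : Set.MapsTo (fun v => A ⊔ F ∙ v) ((B : Set V) \ A).toFinset
      (subspacesBetween A B (Module.finrank F A + 1) : Set (Submodule F V)) := by
    intro v hv
    obtain ⟨hvB, hvA⟩ := Set.mem_toFinset.1 hv
    exact mem_subspacesBetween.2 ⟨le_sup_left, sup_le hAB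
      ((Submodule.span_singleton_le_iff_mem v B).2 hvB), Submodule.finrank_sup_span_singleton hvA⟩
  simp only [Set.ncard_eq_toFinset_card']
  rw [card_eq_sum_card_fiberwise hmaps]
  refine sum_congr rfl fun W hW => congrArg card (ext fun v => ?_)
  obtain ⟨hAW, hWB, hfin⟩ := mem_subspacesBetween.1 hW
  simp only [mem_filter, Set.mem_toFinset, Set.mem_sdiff, SetLike.mem_coe]
  constructor
  · rintro ⟨⟨-, hvA⟩, hv⟩
    exact ⟨(sup_span_singleton_eq_iff hAW hfin hvA).1 hv, hvA⟩
  · rintro ⟨hvW, hvA⟩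
    exact ⟨⟨hWB hvW, hvA⟩, (sup_span_singleton_eq_iff hAW hfin hvA).2 hvW⟩

theorem card_subspacesBetween_finrank_add_one (hAB : A ≤ B) :
    #(subspacesBetween A B (Module.finrank F A + 1)) =
      qInt (Nat.card F) (Module.finrank F B - Module.finrank F A) := by
  have hsum := ncard_sdiff_eq_sum hAB
  have hinterval := ncard_sdiff_add_pow_finrank hAB
  have hpoint (W : Submodule F V) (hW : W ∈ subspacesBetween A B (Module.finrank F A + 1)) :
      ((W : Set V) \ A).ncard = Nat.card F ^ Module.finrank F A * (Nat.card F - 1) := by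
    obtain ⟨hAW, -, hfin⟩ := mem_subspacesBetween.1 hW
    have := ncard_sdiff_add_pow_finrank hAW
    rw [hfin] at this
    rw [Nat.mul_sub, ← pow_succ]
    lia
  rw [sum_congr rfl hpoint, sum_const, smul_eq_mul] at hsum
  obtain ⟨n, hn⟩ := Nat.exists_eq_add_of_le (Submodule.finrank_mono hAB)
  have hq := Finite.one_lt_card (α := F)
  have hgeom := geom_sum_mul_add (Nat.card F - 1) n
  rw [Nat.sub_add_cancel hq.le] at hgeom
  rw [hn, Nat.add_sub_cancel_left, qInt]
  have hpos : 0 < Nat.card F ^ Module.finrank F A * (Nat.card F - 1) := by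
    have := Nat.sub_pos_of_lt hq
    positivity
  refine Nat.eq_of_mul_eq_mul_right hpos ?_
  rw [hsum, hn, pow_add, ← hgeom] at hinterval
  linarith

theorem card_subspacesBetween_of_add_one_eq_finrank (hAB : A ≤ B)
    (hk : k + 1 = Module.finrank F B) :
    #(subspacesBetween A B k) =
      qInt (Nat.card F) (Module.finrank F B - Module.finrank F A) := by
  let e := Subspace.orderIsoFiniteDimensional (K := F) (V := V)
  let _ : Fintype (Submodule F (Module.Dual F V)) := Fintype.ofEquiv _ e.toEquiv
  have hA := Subspace.finrank_add_finrank_dualAnnihilator_eq A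
  have hB := Subspace.finrank_add_finrank_dualAnnihilator_eq B
  have hdual : Submodule.dualAnnihilator B ≤ Submodule.dualAnnihilator A :=
    Submodule.dualAnnihilator_anti hAB
  rw [show Module.finrank F B - Module.finrank F A =
    Module.finrank F A.dualAnnihilator - Module.finrank F B.dualAnnihilator by lia,
    ← card_subspacesBetween_finrank_add_one hdual]
  refine card_equiv e.toEquiv fun W => ?_
  have hW := Subspace.finrank_add_finrank_dualAnnihilator_eq W
  have hAW : W.dualAnnihilator ≤ A.dualAnnihilator ↔ A ≤ W :=
    Subspace.dualAnnihilator_le_dualAnnihilator_iff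
  have hWB : B.dualAnnihilator ≤ W.dualAnnihilator ↔ W ≤ B :=
    Subspace.dualAnnihilator_le_dualAnnihilator_iff
  change _ ↔ W.dualAnnihilator ∈ subspacesBetween _ _ _
  rw [mem_subspacesBetween, mem_subspacesBetween, hAW, hWB]
  lia

lemma card_above_subspacesBetween_succ (hU : U ∈ subspacesBetween A B k) :
    #((subspacesBetween A B (k + 1)).bipartiteAbove (· ≤ ·) U) =
      qInt (Nat.card F) (Module.finrank F B - k) := by
  obtain ⟨hAU, hUB, rfl⟩ := mem_subspacesBetween.1 hU
  rw [bipartiteAbove, filter_le_subspacesBetween hAU, card_subspacesBetween_finrank_add_one hUB]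

lemma card_below_subspacesBetween_succ (hU : U ∈ subspacesBetween A B (k + 1)) :
    #((subspacesBetween A B k).bipartiteBelow (· ≤ ·) U) =
      qInt (Nat.card F) (k + 1 - Module.finrank F A) := by
  obtain ⟨hAU, hUB, hk⟩ := mem_subspacesBetween.1 hU
  rw [bipartiteBelow, filter_ge_subspacesBetween hUB,
    card_subspacesBetween_of_add_one_eq_finrank hAU hk.symm, hk]

theorem isBiregular_subspacesBetween_succ (A B : Submodule F V) (k : ℕ) :
    IsBiregular (· ≤ ·) (subspacesBetween A B k) (subspacesBetween A B (k + 1))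
      (qInt (Nat.card F) (Module.finrank F B - k))
      (qInt (Nat.card F) (k + 1 - Module.finrank F A)) where
  left_nonneg := Nat.cast_nonneg _
  right_nonneg := Nat.cast_nonneg _
  card_above _ hU := congrArg _ (card_above_subspacesBetween_succ hU)
  card_below _ hU := congrArg _ (card_below_subspacesBetween_succ hU)

/- The up and down operators at level `a + m + 1` differ by a scalar, since two distinct subspaces
lie in as many subspaces one dimension up as they contain one dimension down. -/
theorem meanZeroBound_subspacesBetween_succ (hAB : A ≤ B) {m n : ℕ}
    (hB : Module.finrank F B = Module.finrank F A + m + n + 1) :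
    MeanZeroBound (· ≤ ·) (subspacesBetween A B (Module.finrank F A + m))
      (subspacesBetween A B (Module.finrank F A + m + 1))
      (Nat.card F * qInt (Nat.card F) m * qInt (Nat.card F) n) := by
  induction m generalizing n with
  | zero =>
    intro f hf
    rw [add_zero, subspacesBetween_finrank_left hAB] at hf ⊢
    have hzero (W : Submodule F V) : adjSum (· ≤ ·) {A} f W = 0 := by
      refine sum_eq_zero fun U hU => ?_
      rw [mem_singleton.1 ((mem_bipartiteBelow _).1 hU).1, ← hf, sum_singleton]
    simp only [hzero]
    simp [qInt]
  | succ m ih =>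
    intro f hf
    set a := Module.finrank F A
    set q := Nat.card F
    have hdown : ∑ L ∈ subspacesBetween A B (a + m),
        adjSum (Function.swap (· ≤ ·)) (subspacesBetween A B (a + m + 1)) f L ^ 2 ≤
          q * qInt q m * qInt q (n + 1) * ∑ U ∈ subspacesBetween A B (a + m + 1), f U ^ 2 :=
      (ih (n := n + 1) (by lia)).swap (isBiregular_subspacesBetween_succ A B (a + m))
        (by positivity) f hf
    have hupdown := sum_adjSum_sq_of_codegree_eq
      (isBiregular_subspacesBetween_succ A B (a + m + 1)).card_above
      (isBiregular_subspacesBetween_succ A B (a + m)).swap.card_above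
      (fun U hU U' hU' hne => codegree_subspacesBetween hU hU' hne) f
    rw [hB, show a + (m + 1) + n + 1 - (a + m + 1) = n + 1 by lia,
      show a + m + 1 - a = m + 1 by lia] at hupdown
    calc ∑ W ∈ subspacesBetween A B (a + m + 2),
        adjSum (· ≤ ·) (subspacesBetween A B (a + m + 1)) f W ^ 2
        ≤ (q * qInt q m * qInt q (n + 1) + (qInt q (n + 1) - qInt q (m + 1))) *
            ∑ U ∈ subspacesBetween A B (a + m + 1), f U ^ 2 := by
          rw [hupdown, add_mul]
          gcongr
      _ = _ := by
        rw [qInt_succ, qInt_succ]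
        push_cast
        ring_nf

theorem isExpander_subspacesBetween_succ (hAB : A ≤ B) (hAk : Module.finrank F A ≤ k)
    (hkB : k < Module.finrank F B) :
    IsExpander (· ≤ ·) (subspacesBetween A B k) (subspacesBetween A B (k + 1))
      (Nat.card F : ℝ)⁻¹ := by
  refine ⟨_, _, isBiregular_subspacesBetween_succ A B k, fun f hf => ?_⟩
  obtain ⟨m, rfl⟩ := Nat.exists_eq_add_of_le hAk
  obtain ⟨n, hn⟩ := Nat.exists_eq_add_of_lt hkB
  have hq : (0 : ℝ) < Nat.card F := mod_cast Nat.card_pos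
  refine (meanZeroBound_subspacesBetween_succ hAB hn f hf).trans ?_
  rw [hn, show Module.finrank F A + m + n + 1 - (Module.finrank F A + m) = n + 1 by lia,
    show Module.finrank F A + m + 1 - Module.finrank F A = m + 1 by lia, qInt_succ, qInt_succ]
  refine mul_le_mul_of_nonneg_right ?_ (sum_nonneg fun _ _ => sq_nonneg _)
  rw [le_inv_mul_iff₀ hq]
  push_cast
  nlinarith [mul_nonneg hq.le (Nat.cast_nonneg (α := ℝ) (qInt (Nat.card F) m)),
    mul_nonneg hq.le (Nat.cast_nonneg (α := ℝ) (qInt (Nat.card F) n))]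

lemma card_intermediate_subspacesBetween {i j : ℕ} (hij : i ≤ j) (hU : U ∈ subspacesBetween A B i)
    (hW : W ∈ subspacesBetween A B (j + 1)) :
    #{X ∈ subspacesBetween A B j | U ≤ X ∧ X ≤ W} =
      if U ≤ W then qInt (Nat.card F) (j + 1 - i) else 0 := by
  obtain ⟨hAU, -, rfl⟩ := mem_subspacesBetween.1 hU
  obtain ⟨-, hWB, hj⟩ := mem_subspacesBetween.1 hW
  rw [← filter_filter, filter_le_subspacesBetween hAU, filter_ge_subspacesBetween hWB]
  split_ifs with hUW
  · rw [card_subspacesBetween_of_add_one_eq_finrank hUW hj.symm, hj]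
  · refine card_eq_zero.2 (eq_empty_of_forall_notMem fun X hX => hUW ?_)
    obtain ⟨hUX, hXW, -⟩ := mem_subspacesBetween.1 hX
    exact hUX.trans hXW

theorem isExpander_subspacesBetween (hAB : A ≤ B) {i j : ℕ} (hij : i < j) :
    IsExpander (· ≤ ·) (subspacesBetween A B i) (subspacesBetween A B j) (Nat.card F : ℝ)⁻¹ := by
  by_cases hA : Module.finrank F A ≤ i
  swap
  · rw [subspacesBetween_eq_empty_of_lt_finrank (not_le.1 hA)]
    exact .of_complete (by simp) (by positivity)
  by_cases hB : j ≤ Module.finrank F B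
  swap
  · rw [subspacesBetween_eq_empty_of_finrank_lt (not_le.1 hB)]
    exact .of_complete (by simp) (by positivity)
  induction j, hij using Nat.le_induction with
  | base => exact isExpander_subspacesBetween_succ hAB hA hB
  | succ j hij ih =>
    exact (ih (by lia)).comp (isBiregular_subspacesBetween_succ A B j) (qInt_pos _ (by lia))
      fun U hU W hW => card_intermediate_subspacesBetween (by lia) hU hW

end PointCount

section Flags

variable {F V : Type*} [Field F] [AddCommGroup V] [Module F V]
  {σ σ' : Finset (Submodule F V)} {A M M' U W : Submodule F V}

/-- The type of a flag: the set of the dimensions of its members. It is the complete invariant of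
flags under the action of the linear group. -/
noncomputable def flagType (σ : Finset (Submodule F V)) : Finset ℕ :=
  σ.image fun W : Submodule F V => Module.finrank F W

lemma mem_flagType {k : ℕ} : k ∈ flagType σ ↔ ∃ W ∈ σ, Module.finrank F W = k :=
  mem_image

variable [FiniteDimensional F V]

lemma le_iff_finrank_le_of_isChain {s : Set (Submodule F V)} (hs : IsChain (· ≤ ·) s)
    (hU : U ∈ s) (hW : W ∈ s) : U ≤ W ↔ Module.finrank F U ≤ Module.finrank F W := by
  refine ⟨Submodule.finrank_mono, fun h => (hs.total hU hW).elim id fun hWU => ?_⟩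
  exact (Submodule.eq_of_le_of_finrank_le hWU h).ge

lemma eq_of_finrank_eq_of_isChain {s : Set (Submodule F V)} (hs : IsChain (· ≤ ·) s)
    (hU : U ∈ s) (hW : W ∈ s) (h : Module.finrank F U = Module.finrank F W) : U = W :=
  le_antisymm ((le_iff_finrank_le_of_isChain hs hU hW).2 h.le)
    ((le_iff_finrank_le_of_isChain hs hW hU).2 h.ge)

lemma exists_linearEquiv_eqOn_map_eq (e : V ≃ₗ[F] V) (hA : A ≤ M)
    (hA' : A.map (e : V →ₗ[F] V) ≤ M') (hfin : Module.finrank F M = Module.finrank F M') :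
    ∃ e' : V ≃ₗ[F] V, (∀ v ∈ A, e' v = e v) ∧ M.map (e' : V →ₗ[F] V) = M' := by
  let g : M ≃ₗ[F] M' := LinearEquiv.ofFinrankEq M M' hfin
  let f := (g.submoduleMap (A.submoduleOf M)).symm ≪≫ₗ Submodule.submoduleOfEquivOfLe hA ≪≫ₗ
    e.submoduleMap A ≪≫ₗ (Submodule.submoduleOfEquivOfLe hA').symm
  obtain ⟨h, hh⟩ := Submodule.exists_linearEquiv_restrict_eq f
  obtain ⟨e', he'⟩ := Submodule.exists_linearEquiv_restrict_eq (g ≪≫ₗ h)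
  refine ⟨e', fun v hv => ?_, ?_⟩
  · have hgh := hh (g.submoduleMap (A.submoduleOf M) ⟨⟨v, hA hv⟩, hv⟩)
    have hf : (f (g.submoduleMap (A.submoduleOf M) ⟨⟨v, hA hv⟩, hv⟩) : V) = e v := by
      simp only [f, LinearEquiv.trans_apply, LinearEquiv.symm_apply_apply]
      rfl
    rw [← he' ⟨v, hA hv⟩, ← hf, hgh]
    rfl
  · refine Submodule.eq_of_le_of_finrank_eq ?_ (by rw [LinearEquiv.finrank_map_eq, hfin])
    rintro _ ⟨v, hv, rfl⟩
    exact he' ⟨v, hv⟩ ▸ Subtype.coe_prop _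

lemma exists_linearEquiv_map_eq_of_monotoneOn (hσ : IsChain (· ≤ ·) (σ : Set (Submodule F V)))
    (φ : Submodule F V → Submodule F V) (hφ : MonotoneOn φ σ)
    (hfin : ∀ W ∈ σ, Module.finrank F (φ W) = Module.finrank F W) :
    ∃ e : V ≃ₗ[F] V, ∀ W ∈ σ, W.map (e : V →ₗ[F] V) = φ W := by
  induction σ using induction_on_max_value (fun W : Submodule F V => Module.finrank F W) with
  | empty => exact ⟨LinearEquiv.refl F V, by simp⟩
  | insert M s _ hmax ih =>
    have hsub : (s : Set (Submodule F V)) ⊆ insert M s := by simp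
    rw [coe_insert] at hσ hφ
    obtain ⟨e, he⟩ := ih (hσ.mono hsub) (hφ.mono hsub) fun W hW => hfin W (mem_insert_of_mem hW)
    have hle (W : Submodule F V) (hW : W ∈ s) : W ≤ M :=
      (le_iff_finrank_le_of_isChain hσ (hsub hW) (Set.mem_insert M _)).2 (hmax W hW)
    have hmap : (s.sup id).map (e : V →ₗ[F] V) ≤ φ M := by
      rw [Submodule.map_le_iff_le_comap]
      refine Finset.sup_le fun W hW => ?_
      rw [id, ← Submodule.map_le_iff_le_comap, he W hW]
      exact hφ (hsub hW) (Set.mem_insert M _) (hle W hW)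
    obtain ⟨e', heq, hM⟩ := exists_linearEquiv_eqOn_map_eq e (Finset.sup_le hle) hmap
      (hfin M (mem_insert_self M s)).symm
    refine ⟨e', forall_mem_insert _ _ _ |>.2 ⟨hM, fun W hW => ?_⟩⟩
    rw [← he W hW]
    exact SetLike.coe_injective
      (Set.image_congr fun v hv => heq v (le_sup (f := id) hW hv))

theorem exists_linearEquiv_map_eq_of_isChain (hσ : IsChain (· ≤ ·) (σ : Set (Submodule F V)))
    (hσ' : IsChain (· ≤ ·) (σ' : Set (Submodule F V)))
    (htype : flagType σ = flagType σ') :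
    ∃ e : V ≃ₗ[F] V, σ.image (fun W => W.map (e : V →ₗ[F] V)) = σ' := by
  have hmem (W : Submodule F V) (hW : W ∈ σ) :
      ∃ W' ∈ σ', Module.finrank F W' = Module.finrank F W :=
    mem_flagType.1 (htype ▸ mem_flagType.2 ⟨W, hW, rfl⟩)
  choose! φ hφσ' hfin using hmem
  have hmono : MonotoneOn φ σ := fun U hU W hW hUW => by
    rw [le_iff_finrank_le_of_isChain hσ' (hφσ' U hU) (hφσ' W hW), hfin U hU, hfin W hW]
    exact Submodule.finrank_mono hUW
  obtain ⟨e, he⟩ := exists_linearEquiv_map_eq_of_monotoneOn hσ φ hmono hfin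
  refine ⟨e, ?_⟩
  rw [image_congr he]
  refine (image_subset_iff.2 hφσ').antisymm fun W' hW' => ?_
  obtain ⟨W, hW, hWW'⟩ := mem_flagType.1 (htype.symm ▸ mem_flagType.2 ⟨W', hW', rfl⟩)
  exact mem_image.2 ⟨W, hW,
    eq_of_finrank_eq_of_isChain hσ' (hφσ' W hW) hW' ((hfin W hW).trans hWW')⟩

end Flags

section Links

variable {F V : Type*} [Field F] [AddCommGroup V] [Module F V] [Fintype (Submodule F V)]
  {τ : Finset (Submodule F V)} {U W X : Submodule F V} {i j k : ℕ}

/-- The vertices of dimension `k` of the link of the flag `τ`, in the complex of all subspaces.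
A member of `τ` of dimension `k` counts as one of them. -/
noncomputable def linkVertices (τ : Finset (Submodule F V)) (k : ℕ) : Finset (Submodule F V) :=
  {W | Module.finrank F W = k ∧ ∀ X ∈ τ, W ≤ X ∨ X ≤ W}

lemma mem_linkVertices :
    W ∈ linkVertices τ k ↔ Module.finrank F W = k ∧ ∀ X ∈ τ, W ≤ X ∨ X ≤ W := by
  simp [linkVertices]

lemma isChain_insert_of_mem_linkVertices (hτ : IsChain (· ≤ ·) (τ : Set (Submodule F V)))
    (hW : W ∈ linkVertices τ k) :
    IsChain (· ≤ ·) ((insert W τ : Finset (Submodule F V)) : Set (Submodule F V)) := by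
  rw [coe_insert]
  exact hτ.insert fun X hX _ => (mem_linkVertices.1 hW).2 X hX

lemma flagType_insert_of_mem_linkVertices (hW : W ∈ linkVertices τ k) :
    flagType (insert W τ) = insert k (flagType τ) := by
  rw [flagType, image_insert, (mem_linkVertices.1 hW).1, flagType]

variable [FiniteDimensional F V]

lemma le_of_mem_linkVertices (hW : W ∈ linkVertices τ k) (hX : X ∈ τ)
    (hXk : Module.finrank F X < k) : X ≤ W := by
  obtain ⟨rfl, hcomp⟩ := mem_linkVertices.1 hW
  exact (hcomp X hX).resolve_left fun h => hXk.not_ge (Submodule.finrank_mono h)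

lemma ge_of_mem_linkVertices (hW : W ∈ linkVertices τ k) (hX : X ∈ τ)
    (hkX : k < Module.finrank F X) : W ≤ X := by
  obtain ⟨rfl, hcomp⟩ := mem_linkVertices.1 hW
  exact (hcomp X hX).resolve_right fun h => hkX.not_ge (Submodule.finrank_mono h)

lemma linkVertices_eq_subspacesBetween (hk : ∀ X ∈ τ, Module.finrank F X ≠ k) :
    linkVertices τ k = subspacesBetween
      ((τ.filter fun X : Submodule F V => Module.finrank F X < k).sup id)
      ((τ.filter fun X : Submodule F V => k < Module.finrank F X).inf id) k := by
  ext W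
  simp only [mem_subspacesBetween, Finset.sup_le_iff, Finset.le_inf_iff, mem_filter, id]
  constructor
  · intro hW
    exact ⟨fun X hX => le_of_mem_linkVertices hW hX.1 hX.2,
      fun X hX => ge_of_mem_linkVertices hW hX.1 hX.2, (mem_linkVertices.1 hW).1⟩
  · rintro ⟨hbelow, habove, hfin⟩
    refine mem_linkVertices.2 ⟨hfin, fun X hX => ?_⟩
    rcases (hk X hX).lt_or_gt with hlt | hgt
    · exact .inr (hbelow X ⟨hX, hlt⟩)
    · exact .inl (habove X ⟨hX, hgt⟩)

lemma linkVertices_insert (hij : i < j) (hU : Module.finrank F U = i) :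
    linkVertices (insert U τ) j = (linkVertices τ j).bipartiteAbove (· ≤ ·) U := by
  subst hU
  ext W
  simp only [mem_bipartiteAbove, mem_linkVertices, forall_mem_insert]
  constructor
  · rintro ⟨rfl, hU, hτ⟩
    exact ⟨⟨rfl, hτ⟩, hU.resolve_left fun h => hij.not_ge (Submodule.finrank_mono h)⟩
  · rintro ⟨⟨hW, hτ⟩, hU⟩
    exact ⟨hW, .inr hU, hτ⟩

theorem isExpander_linkVertices [Finite F] (hτ : IsChain (· ≤ ·) (τ : Set (Submodule F V)))
    (hij : i < j) (hi : ∀ X ∈ τ, Module.finrank F X ≠ i) (hj : ∀ X ∈ τ, Module.finrank F X ≠ j) :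
    IsExpander (· ≤ ·) (linkVertices τ i) (linkVertices τ j) (Nat.card F : ℝ)⁻¹ := by
  by_cases hsep : ∃ X ∈ τ, i < Module.finrank F X ∧ Module.finrank F X < j
  · obtain ⟨X, hX, hiX, hXj⟩ := hsep
    exact .of_complete (fun U hU W hW => (ge_of_mem_linkVertices hU hX hiX).trans
      (le_of_mem_linkVertices hW hX hXj)) (by positivity)
  push Not at hsep
  have hbelow : τ.filter (fun X : Submodule F V => Module.finrank F X < i) =
      τ.filter fun X : Submodule F V => Module.finrank F X < j :=
    filter_congr fun X hX => by grind
  have habove : τ.filter (fun X : Submodule F V => i < Module.finrank F X) =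
      τ.filter fun X : Submodule F V => j < Module.finrank F X :=
    filter_congr fun X hX => by grind
  rw [linkVertices_eq_subspacesBetween hi, linkVertices_eq_subspacesBetween hj, ← hbelow, ← habove]
  refine isExpander_subspacesBetween (Finset.sup_le fun X hX => Finset.le_inf fun Y hY => ?_) hij
  obtain ⟨hXτ, hXi⟩ := mem_filter.1 hX
  obtain ⟨hYτ, hiY⟩ := mem_filter.1 hY
  exact (le_iff_finrank_le_of_isChain hτ hXτ hYτ).2 (hXi.trans hiY).le

end Links

section MaximalFaces

variable {F : Type} [Field F] [Fintype F] {n : ℕ} {S : Finset ℕ}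
  {σ σ' τ T : Finset (Submodule F (Fin n → F))} {U W : Submodule F (Fin n → F)} {i j k : ℕ}

lemma mem_maxFacesAbove : T ∈ maxFacesAbove F n S τ ↔ IsMaxFlagFace F n S T ∧ τ ⊆ T := by
  simp [maxFacesAbove]

lemma isMaxFlagFace_iff :
    IsMaxFlagFace F n S T ↔
      IsChain (· ≤ ·) (T : Set (Submodule F (Fin n → F))) ∧ flagType T = S := by
  simp only [IsMaxFlagFace, IsFlagFace, and_assoc, Subset.antisymm_iff, flagType,
    image_subset_iff, subset_iff (s₁ := S), mem_image]

lemma isMaxFlagFace_map_iff (e : (Fin n → F) ≃ₗ[F] (Fin n → F)) :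
    IsMaxFlagFace F n S (T.map (Submodule.orderIsoMapComap e).toEquiv.toEmbedding) ↔
      IsMaxFlagFace F n S T := by
  rw [isMaxFlagFace_iff, isMaxFlagFace_iff, coe_map]
  refine and_congr (IsChain.image_relIso_iff (φ := Submodule.orderIsoMapComap e)) ?_
  rw [flagType, map_eq_image, image_image]
  exact Eq.congr_left (image_congr fun W _ => LinearEquiv.finrank_map_eq e W)

lemma card_maxFacesAbove_map (e : (Fin n → F) ≃ₗ[F] (Fin n → F)) :
    #(maxFacesAbove F n S (σ.map (Submodule.orderIsoMapComap e).toEquiv.toEmbedding)) =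
      #(maxFacesAbove F n S σ) := by
  refine (card_equiv (Submodule.orderIsoMapComap e).toEquiv.finsetCongr fun T => ?_).symm
  rw [mem_maxFacesAbove, mem_maxFacesAbove, Equiv.finsetCongr_apply, isMaxFlagFace_map_iff,
    map_subset_map]

theorem card_maxFacesAbove_eq_of_flagType_eq
    (hσ : IsChain (· ≤ ·) (σ : Set (Submodule F (Fin n → F))))
    (hσ' : IsChain (· ≤ ·) (σ' : Set (Submodule F (Fin n → F))))
    (htype : flagType σ = flagType σ') :
    #(maxFacesAbove F n S σ) = #(maxFacesAbove F n S σ') := by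
  obtain ⟨e, rfl⟩ := exists_linearEquiv_map_eq_of_isChain hσ hσ' htype
  rw [← card_maxFacesAbove_map e, map_eq_image]
  rfl

lemma sum_maxFacesAbove_sum_filter (τ : Finset (Submodule F (Fin n → F))) (k : ℕ)
    (h : Finset (Submodule F (Fin n → F)) → Submodule F (Fin n → F) → ℝ) :
    ∑ T ∈ maxFacesAbove F n S τ,
        ∑ W ∈ T.filter (fun W : Submodule F (Fin n → F) => Module.finrank F W = k), h T W =
      ∑ W ∈ linkVertices τ k, ∑ T ∈ maxFacesAbove F n S (insert W τ), h T W := by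
  refine sum_comm' fun T W => ?_
  simp only [mem_maxFacesAbove, mem_filter, mem_linkVertices, insert_subset_iff]
  constructor
  · rintro ⟨⟨hT, hτT⟩, hWT, hWk⟩
    exact ⟨⟨hT, hWT, hτT⟩, hWk, fun X hX => hT.1.1.total hWT (hτT hX)⟩
  · rintro ⟨⟨hT, hWT, hτT⟩, hWk, -⟩
    exact ⟨⟨hT, hτT⟩, hWT, hWk⟩

lemma card_maxFacesAbove_insert_insert_eq {U' W' : Submodule F (Fin n → F)}
    (hτ : IsChain (· ≤ ·) (τ : Set (Submodule F (Fin n → F))))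
    (hU : U ∈ linkVertices τ i) (hW : W ∈ linkVertices (insert U τ) j)
    (hU' : U' ∈ linkVertices τ i) (hW' : W' ∈ linkVertices (insert U' τ) j) :
    #(maxFacesAbove F n S (insert W (insert U τ))) =
      #(maxFacesAbove F n S (insert W' (insert U' τ))) := by
  refine card_maxFacesAbove_eq_of_flagType_eq
    (isChain_insert_of_mem_linkVertices (isChain_insert_of_mem_linkVertices hτ hU) hW)
    (isChain_insert_of_mem_linkVertices (isChain_insert_of_mem_linkVertices hτ hU') hW') ?_
  simp only [flagType_insert_of_mem_linkVertices hU, flagType_insert_of_mem_linkVertices hW,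
    flagType_insert_of_mem_linkVertices hU', flagType_insert_of_mem_linkVertices hW']

theorem exists_sum_maxFacesAbove_eq_mul_sum_edges (S : Finset ℕ)
    (hτ : IsChain (· ≤ ·) (τ : Set (Submodule F (Fin n → F)))) (i j : ℕ) :
    ∃ m : ℕ, ∀ h : Submodule F (Fin n → F) → Submodule F (Fin n → F) → ℝ,
      ∑ T ∈ maxFacesAbove F n S τ,
        ∑ U ∈ T.filter (fun U : Submodule F (Fin n → F) => Module.finrank F U = i),
          ∑ W ∈ T.filter (fun W : Submodule F (Fin n → F) => Module.finrank F W = j), h U W =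
      m * ∑ U ∈ linkVertices τ i, ∑ W ∈ linkVertices (insert U τ) j, h U W := by
  have hconst : ∃ m : ℕ, ∀ U ∈ linkVertices τ i, ∀ W ∈ linkVertices (insert U τ) j,
      #(maxFacesAbove F n S (insert W (insert U τ))) = m := by
    by_cases hne : ∃ U ∈ linkVertices τ i, (linkVertices (insert U τ) j).Nonempty
    · obtain ⟨U₀, hU₀, W₀, hW₀⟩ := hne
      exact ⟨#(maxFacesAbove F n S (insert W₀ (insert U₀ τ))), fun U hU W hW =>
        card_maxFacesAbove_insert_insert_eq hτ hU hW hU₀ hW₀⟩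
    · exact ⟨0, fun U hU W hW => (hne ⟨U, hU, W, hW⟩).elim⟩
  obtain ⟨m, hm⟩ := hconst
  refine ⟨m, fun h => ?_⟩
  rw [sum_maxFacesAbove_sum_filter, mul_sum]
  refine sum_congr rfl fun U hU => ?_
  rw [sum_maxFacesAbove_sum_filter _ _ fun _ W => h U W, mul_sum]
  exact sum_congr rfl fun W hW => by rw [sum_const, hm U hU W hW, nsmul_eq_mul]

lemma exists_filter_finrank_eq_singleton (hT : IsMaxFlagFace F n S T) (hk : k ∈ S) :
    ∃ W, T.filter (fun W : Submodule F (Fin n → F) => Module.finrank F W = k) = {W} := by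
  obtain ⟨W, hWT, hW⟩ := hT.2 k hk
  refine ⟨W, eq_singleton_iff_unique_mem.2 ⟨mem_filter.2 ⟨hWT, hW⟩, fun W' hW' => ?_⟩⟩
  obtain ⟨hW'T, hW'⟩ := mem_filter.1 hW'
  exact eq_of_finrank_eq_of_isChain hT.1.1 hW'T hWT (hW'.trans hW.symm)

lemma twoColorExp_comm (i j : ℕ) (f : Submodule F (Fin n → F) → ℝ) :
    twoColorExp F n S τ i j f = twoColorExp F n S τ j i f := by
  simp only [twoColorExp, add_comm]

lemma twoColorPairExp_comm (i j : ℕ) (f g : Submodule F (Fin n → F) → ℝ) :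
    twoColorPairExp F n S τ i j f g = twoColorPairExp F n S τ j i g f := by
  simp only [twoColorPairExp, mul_comm]

lemma twoColorExp_eq_sum_sum (hi : i ∈ S) (hj : j ∈ S) (f : Submodule F (Fin n → F) → ℝ) :
    twoColorExp F n S τ i j f =
      (∑ T ∈ maxFacesAbove F n S τ,
        ∑ U ∈ T.filter (fun U : Submodule F (Fin n → F) => Module.finrank F U = i),
          ∑ W ∈ T.filter (fun W : Submodule F (Fin n → F) => Module.finrank F W = j),
            (f U + f W) / 2) / #(maxFacesAbove F n S τ) := by
  rw [twoColorExp]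
  refine congrArg (· / _) (sum_congr rfl fun T hT => ?_)
  have hmax := (mem_maxFacesAbove.1 hT).1
  obtain ⟨U, hU⟩ := exists_filter_finrank_eq_singleton hmax hi
  obtain ⟨W, hW⟩ := exists_filter_finrank_eq_singleton hmax hj
  simp only [hU, hW, sum_singleton]

theorem exists_twoColor_eq_mul_sum_edges
    (hτ : IsChain (· ≤ ·) (τ : Set (Submodule F (Fin n → F))))
    (hij : i < j) (hi : i ∈ S) (hj : j ∈ S) :
    ∃ κ : ℝ, 0 ≤ κ ∧
      (∀ f, twoColorExp F n S τ i j f =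
        κ * ((∑ U ∈ linkVertices τ i,
          ∑ W ∈ (linkVertices τ j).bipartiteAbove (· ≤ ·) U, (f U + f W)) / 2)) ∧
      ∀ f g, twoColorPairExp F n S τ i j f g =
        κ * ∑ U ∈ linkVertices τ i,
          ∑ W ∈ (linkVertices τ j).bipartiteAbove (· ≤ ·) U, f U * g W := by
  obtain ⟨m, hm⟩ := exists_sum_maxFacesAbove_eq_mul_sum_edges S hτ i j
  have hedges (h : Submodule F (Fin n → F) → Submodule F (Fin n → F) → ℝ) :
      ∑ U ∈ linkVertices τ i, ∑ W ∈ linkVertices (insert U τ) j, h U W =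
        ∑ U ∈ linkVertices τ i, ∑ W ∈ (linkVertices τ j).bipartiteAbove (· ≤ ·) U, h U W :=
    sum_congr rfl fun U hU => by rw [linkVertices_insert hij (mem_linkVertices.1 hU).1]
  simp only [hedges] at hm
  refine ⟨m / #(maxFacesAbove F n S τ), by positivity, fun f => ?_, fun f g => ?_⟩
  · rw [twoColorExp_eq_sum_sum hi hj, hm fun U W => (f U + f W) / 2]
    simp only [← sum_div]
    ring
  · simp only [twoColorPairExp, sum_mul_sum]
    rw [hm fun U W => f U * g W]
    ring

theorem twoColorPairExp_le_of_lt (hτ : IsChain (· ≤ ·) (τ : Set (Submodule F (Fin n → F))))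
    (hij : i < j) (hi : i ∈ S) (hj : j ∈ S) (hiτ : ∀ W ∈ τ, Module.finrank F W ≠ i)
    (hjτ : ∀ W ∈ τ, Module.finrank F W ≠ j) {f : Submodule F (Fin n → F) → ℝ}
    (hmean : twoColorExp F n S τ i j f = 0) :
    twoColorPairExp F n S τ i j f f ≤
      √(Nat.card F : ℝ)⁻¹ * twoColorExp F n S τ i j fun W => f W ^ 2 := by
  obtain ⟨κ, hκ, hexp, hpair⟩ := exists_twoColor_eq_mul_sum_edges hτ hij hi hj
  rw [hexp] at hmean
  rw [hexp, hpair, mul_left_comm]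
  rcases mul_eq_zero.1 hmean with rfl | hedges
  · simp only [zero_mul, le_refl]
  · exact mul_le_mul_of_nonneg_left ((isExpander_linkVertices hτ hij hiτ hjτ).sum_above_mul_le
      (by positivity) f f (by linarith)) hκ

end MaximalFaces

/-- The projected flags complex `B(d,S,q)` is a `(1/√q)`-product: for any
face `τ` of codimension at least `2` and colors `i ≠ j` in `S` not used by `τ`, the bipartite
graph between the color classes `i` and `j` of the link of `τ` has normalized second
eigenvalue at most `1/√q`, stated in Rayleigh-quotient form. -/
theorem stmt_2 (q : ℕ) (hq : IsPrimePow q)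
    (F : Type) [Field F] [Fintype F] (hF : Fintype.card F = q)
    (d : ℕ) (hd : 3 ≤ d)
    (S : Finset ℕ) (hS : S ⊆ Finset.Icc 1 (d - 1)) (hScard : 2 ≤ S.card)
    (τ : Finset (Submodule F (Fin d → F))) (hτ : IsFlagFace F d S τ)
    (hcodim : τ.card + 2 ≤ S.card)
    (i j : ℕ) (hi : i ∈ S) (hj : j ∈ S) (hij : i ≠ j)
    (hiτ : ∀ W ∈ τ, Module.finrank F W ≠ i)
    (hjτ : ∀ W ∈ τ, Module.finrank F W ≠ j)
    (f : Submodule F (Fin d → F) → ℝ)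
    (hmean : twoColorExp F d S τ i j f = 0) :
    twoColorPairExp F d S τ i j f f ≤
      (1 / Real.sqrt (q : ℝ)) * twoColorExp F d S τ i j (fun W => (f W) ^ 2) := by
  rw [← hF, ← Nat.card_eq_fintype_card, one_div, ← Real.sqrt_inv]
  rcases hij.lt_or_gt with hlt | hgt
  · exact twoColorPairExp_le_of_lt hτ.1 hlt hi hj hiτ hjτ hmean
  · rw [twoColorExp_comm] at hmean
    rw [twoColorPairExp_comm, twoColorExp_comm]
    exact twoColorPairExp_le_of_lt hτ.1 hgt hj hi hjτ hiτ hmean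
end

section
/- Let q be a prime power, F a finite field with q elements, d ≥ 3 an integer, S ⊆ {1,…,d−1} with |S| ≥ 2, and let r ≥ 0 satisfy 2r+2 ≤ |S| and √q − 1 − 2(|S|−r) > 0. Let J be a set of m ≥ 2 pairwise disjoint (r+1)-element subsets of S. The colored faces complex F^J(B(d,S,q)) has as vertices the chains s of subspaces of F^d with {dim(U) : U ∈ s} ∈ J, and as faces the sets of such chains with pairwise distinct dimension sets whose union is a chain; its maximal faces have exactly one chain of each dimension set c ∈ J and carry the distribution obtained by sampling a uniformly random maximal face T of B(d,S,q), restricting T to the subspaces with dimension in ∪J, and partitioning the restriction into blocks according to J. Then F^J(B(d,S,q)) is a one-sided local spectral expander with parameter λ′ = 2(r+1)/(√q − 1 − 2(|S|−r)); explicitly, for every face σ of F^J(B(d,S,q)) with |σ| ≤ m−2 the following holds: sample a maximal face of F^J(B(d,S,q)) from its distribution conditioned on containing σ, let (b,b′) be a uniformly random ordered pair of distinct blocks of the sampled maximal face not in σ, and let π₀ be a uniformly random single such block; then every f from the vertices of the link of σ to ℝ with E_{π₀}[f] = 0 satisfies E[f(b)·f(b′)] ≤ λ′·E_{π₀}[f²].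 -/
open Finset
open scoped Classical

/-- The maximal faces of `B(n,S,q)` whose blocks contain all blocks of `σ`. -/
noncomputable def topsAboveBlocks (F : Type) [Field F] [Fintype F] (n : ℕ) (S : Finset ℕ)
    (σ : Finset (Finset (Submodule F (Fin n → F)))) :
    Finset (Finset (Submodule F (Fin n → F))) :=
  Finset.univ.filter fun T => IsMaxFlagFace F n S T ∧ ∀ s ∈ σ, s ⊆ T

/-- The block of dimension-set `c` of a maximal face `T`: its subspaces of dimension in `c`. -/
noncomputable def blockOf (F : Type) [Field F] [Fintype F] (n : ℕ)
    (T : Finset (Submodule F (Fin n → F))) (c : Finset ℕ) :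
    Finset (Submodule F (Fin n → F)) :=
  T.filter fun W : Submodule F (Fin n → F) => Module.finrank F W ∈ c

/-- The dimension-sets of `J` not used by the blocks of `σ`. -/
noncomputable def remColors (F : Type) [Field F] [Fintype F] (n : ℕ)
    (J : Finset (Finset ℕ)) (σ : Finset (Finset (Submodule F (Fin n → F)))) :
    Finset (Finset ℕ) :=
  J \ σ.image (fun s => s.image (fun W : Submodule F (Fin n → F) => Module.finrank F W))

/-- `E_{π₀}[f]`: sample a uniformly random maximal face of `B(n,S,q)` whose block-set
contains `σ`, then a uniformly random block of it not in `σ`. -/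
noncomputable def facesVertExp (F : Type) [Field F] [Fintype F] (n : ℕ) (S : Finset ℕ)
    (J : Finset (Finset ℕ)) (σ : Finset (Finset (Submodule F (Fin n → F))))
    (f : Finset (Submodule F (Fin n → F)) → ℝ) : ℝ :=
  (∑ T ∈ topsAboveBlocks F n S σ,
      (∑ c ∈ remColors F n J σ, f (blockOf F n T c)) /
        ((remColors F n J σ).card : ℝ)) /
    ((topsAboveBlocks F n S σ).card : ℝ)

/-- `E[f(b)·g(b′)]`: sample a uniformly random maximal face of `B(n,S,q)` whose block-set
contains `σ`, then a uniformly random ordered pair of distinct blocks of it not in `σ`. -/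
noncomputable def facesPairExp (F : Type) [Field F] [Fintype F] (n : ℕ) (S : Finset ℕ)
    (J : Finset (Finset ℕ)) (σ : Finset (Finset (Submodule F (Fin n → F))))
    (f g : Finset (Submodule F (Fin n → F)) → ℝ) : ℝ :=
  (∑ T ∈ topsAboveBlocks F n S σ,
      (∑ c ∈ remColors F n J σ, ∑ c' ∈ (remColors F n J σ).erase c,
          f (blockOf F n T c) * g (blockOf F n T c')) /
        (((remColors F n J σ).card : ℝ) * (((remColors F n J σ).card : ℝ) - 1))) /
    ((topsAboveBlocks F n S σ).card : ℝ)

/-!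
A uniformly random ordered basis of `F^d` spans a uniformly random complete flag. So, conditioned on
`σ`, the block of dimension set `c` is a function of the spans of the first `t` basis vectors,
`t ∈ c`, of a random basis whose spans in the dimensions of `σ` are prescribed.

Whatever other spans are prescribed, the spans of dimensions `a` and `a + 1` form a uniformly random
edge of the Grassmann graph of an interval of subspaces, where the walk recursion bounds
correlations by `1 / √q`. For `a < b` the bound persists, because the `a`-th and `b`-th spans are
independent given the `(a + 1)`-st. Orthogonal projection adds the dimensions of a block one at a
time, and their contributions add in quadrature; so blocks with at most `k` dimensions have
correlation at most `√k * √k / √q = k / √q`.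

In the expectation over pairs of distinct blocks, the means `μ c` of `f` on the blocks contribute
`(∑ c, μ c) ^ 2 - ∑ c, μ c ^ 2 ≤ 0`, so only the correlations count.
-/

open Module
open scoped BigOperators

section CorrelationBounds

variable {ι E : Type*} [DecidableEq ι] [NormedAddCommGroup E] [InnerProductSpace ℝ E]

/-- For a family of subspaces `K B`, to be thought of as the functions of the coordinates in `B`:
once the coordinates of any set `B` are fixed, centred functions of the coordinates in `c` and
centred functions of the coordinates in `c'` have correlation at most `ε`. -/
def CorrelationBound (K : Finset ι → Submodule ℝ E) (c c' : Finset ι) (ε : ℝ) : Prop :=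
  ∀ B, ∀ f ∈ K (B ∪ c), f ∈ (K B)ᗮ → ∀ g ∈ K (B ∪ c'), g ∈ (K B)ᗮ →
    inner ℝ f g ≤ ε * (‖f‖ * ‖g‖)

namespace CorrelationBound

variable {K : Finset ι → Submodule ℝ E} {c c' : Finset ι} {a a' b : ι} {ε ε₁ ε₂ : ℝ}

theorem symm (h : CorrelationBound K c c' ε) : CorrelationBound K c' c ε := by
  intro B f hf hfB g hg hgB
  rw [real_inner_comm, mul_comm ‖f‖]
  exact h B g hg hgB f hf hfB

theorem empty_left (K : Finset ι → Submodule ℝ E) (c : Finset ι) : CorrelationBound K ∅ c 0 := by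
  intro B f hf hfB g _ _
  rw [union_empty] at hf
  simp [inner_self_eq_zero.mp (Submodule.inner_right_of_mem_orthogonal hf hfB)]

variable [∀ B, (K B).HasOrthogonalProjection]

/-- Splitting `f` into its projection to `K (B ∪ c)` and the orthogonal remainder makes the two
contributions to `⟪f, g⟫` add up in quadrature. -/
theorem insert_left (hK : Monotone K) (hε : 0 ≤ ε₂) (hc : CorrelationBound K c c' ε₁)
    (ha : CorrelationBound K {a} c' ε₂) :
    CorrelationBound K (insert a c) c' (√(ε₁ ^ 2 + ε₂ ^ 2)) := by
  intro B f hf hfB g hg hgB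
  set P := (K (B ∪ c)).starProjection
  have hP (x : E) : P x ∈ K (B ∪ c) := Submodule.starProjection_apply_mem _ x
  have hQ (x : E) : x - P x ∈ (K (B ∪ c))ᗮ := Submodule.sub_starProjection_mem_orthogonal x
  have hPfB : P f ∈ (K B)ᗮ := by
    rw [← sub_sub_cancel f (P f)]
    exact sub_mem hfB (Submodule.orthogonal_le (hK subset_union_left) (hQ f))
  have hQf : f - P f ∈ K (B ∪ c ∪ {a}) :=
    sub_mem (hK (by grind) hf) (hK subset_union_left (hP f))
  have hQg : g - P g ∈ K (B ∪ c ∪ c') :=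
    sub_mem (hK (by grind) hg) (hK subset_union_left (hP g))
  have split_inner : inner ℝ f g = inner ℝ (P f) g + inner ℝ (f - P f) (g - P g) := by
    rw [inner_sub_right, Submodule.inner_left_of_mem_orthogonal (hP g) (hQ f), sub_zero,
      ← inner_add_left, add_sub_cancel]
  have split_norm (x : E) : ‖x‖ ^ 2 = ‖P x‖ ^ 2 + ‖x - P x‖ ^ 2 := by
    have := norm_add_sq_eq_norm_sq_add_norm_sq_of_inner_eq_zero (𝕜 := ℝ) (P x) (x - P x)
      (Submodule.inner_right_of_mem_orthogonal (hP x) (hQ x))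
    rw [add_sub_cancel] at this
    linarith
  have hQg_le : ‖g - P g‖ ≤ ‖g‖ :=
    (pow_le_pow_iff_left₀ (norm_nonneg _) (norm_nonneg _) two_ne_zero).mp <| by
      linarith [split_norm g, sq_nonneg ‖P g‖]
  have cauchy_schwarz : ε₁ * ‖P f‖ + ε₂ * ‖f - P f‖ ≤ √(ε₁ ^ 2 + ε₂ ^ 2) * ‖f‖ := by
    rw [← Real.sqrt_sq (norm_nonneg f), ← Real.sqrt_mul (by positivity)]
    apply Real.le_sqrt_of_sq_le
    rw [split_norm f]
    linarith [sq_nonneg (ε₁ * ‖f - P f‖ - ε₂ * ‖P f‖)]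
  calc inner ℝ f g
      = inner ℝ (P f) g + inner ℝ (f - P f) (g - P g) := split_inner
    _ ≤ ε₁ * (‖P f‖ * ‖g‖) + ε₂ * (‖f - P f‖ * ‖g - P g‖) :=
        add_le_add (hc B _ (hP f) hPfB g hg hgB) (ha _ _ hQf (hQ f) _ hQg (hQ g))
    _ ≤ ε₁ * (‖P f‖ * ‖g‖) + ε₂ * (‖f - P f‖ * ‖g‖) := by gcongr
    _ = (ε₁ * ‖P f‖ + ε₂ * ‖f - P f‖) * ‖g‖ := by ring
    _ ≤ √(ε₁ ^ 2 + ε₂ ^ 2) * ‖f‖ * ‖g‖ := by gcongr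
    _ = √(ε₁ ^ 2 + ε₂ ^ 2) * (‖f‖ * ‖g‖) := mul_assoc ..

theorem of_forall_left (hK : Monotone K) (hε : 0 ≤ ε)
    (h : ∀ a ∈ c, CorrelationBound K {a} c' ε) : CorrelationBound K c c' (√(#c) * ε) := by
  induction c using Finset.induction_on with
  | empty => simpa using empty_left K c'
  | insert a c ha ih =>
    have hc := ih fun b hb => h b (mem_insert_of_mem hb)
    convert insert_left hK hε hc (h a (mem_insert_self a c)) using 1
    rw [mul_pow, Real.sq_sqrt (Nat.cast_nonneg _), ← add_one_mul, Real.sqrt_mul (by positivity),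
      Real.sqrt_sq hε, card_insert_of_notMem ha, Nat.cast_succ]

theorem of_forall (hK : Monotone K) (hε : 0 ≤ ε)
    (h : ∀ a ∈ c, ∀ b ∈ c', CorrelationBound K {a} {b} ε) :
    CorrelationBound K c c' (√(#c) * (√(#c') * ε)) :=
  of_forall_left hK (by positivity) fun a ha =>
    (of_forall_left hK hε fun b hb => (h a ha b hb).symm).symm

/-- Projecting to `K (B ∪ {b})` does not change `⟪f, g⟫`, by conditional independence, and turns
the function `g` of the coordinate `a'` into a function of the coordinate `b`. -/
theorem of_condIndep (hK : Monotone K) (hε : 0 ≤ ε) (hb : CorrelationBound K {a} {b} ε)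
    (hindep : ∀ B, b ∈ B → ∀ f ∈ K (B ∪ {a}), f ∈ (K B)ᗮ → ∀ g ∈ K (B ∪ {a'}),
      inner ℝ f g = 0) :
    CorrelationBound K {a} {a'} ε := by
  intro B f hf hfB g hg hgB
  set P := (K (B ∪ {b})).starProjection
  have hP (x : E) : P x ∈ K (B ∪ {b}) := Submodule.starProjection_apply_mem _ x
  have hQ (x : E) : x - P x ∈ (K (B ∪ {b}))ᗮ := Submodule.sub_starProjection_mem_orthogonal x
  have hPgB : P g ∈ (K B)ᗮ := by
    rw [← sub_sub_cancel g (P g)]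
    exact sub_mem hgB (Submodule.orthogonal_le (hK subset_union_left) (hQ g))
  have hQf : f - P f ∈ K (B ∪ {b} ∪ {a}) :=
    sub_mem (hK (by grind) hf) (hK subset_union_left (hP f))
  have hg' : g ∈ K (B ∪ {b} ∪ {a'}) := hK (by grind) hg
  have hQfg : inner ℝ (f - P f) g = 0 := hindep _ (by simp) _ hQf (hQ f) g hg'
  have hPfg : inner ℝ (P f) (g - P g) = 0 := Submodule.inner_right_of_mem_orthogonal (hP f) (hQ g)
  have hQfPg : inner ℝ (f - P f) (P g) = 0 := Submodule.inner_left_of_mem_orthogonal (hP g) (hQ f)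
  rw [inner_sub_left] at hQfg hQfPg
  rw [inner_sub_right] at hPfg
  calc inner ℝ f g = inner ℝ f (P g) := by linarith
    _ ≤ ε * (‖f‖ * ‖P g‖) := hb B f hf hfB _ (hP g) hPgB
    _ ≤ ε * (‖f‖ * ‖g‖) := by gcongr; exact Submodule.norm_starProjection_apply_le _ g

end CorrelationBound

end CorrelationBounds

section Averages

variable {Ω β : Type*}

theorem expect_comp_of_card_fiber [DecidableEq β] {s : Finset Ω} {π : Ω → β}
    (hπ : ∀ u ∈ s, ∀ v ∈ s, #{w ∈ s | π w = π u} = #{w ∈ s | π w = π v}) (h : β → ℝ) :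
    𝔼 u ∈ s, h (π u) = 𝔼 p ∈ s.image π, h p := by
  obtain rfl | ⟨v, hv⟩ := s.eq_empty_or_nonempty
  · simp
  have fiber_eq : ∀ p ∈ s.image π, #{w ∈ s | π w = p} = #{w ∈ s | π w = π v} :=
    forall_mem_image.mpr fun u hu => hπ u hu v hv
  have card_eq : #s = #(s.image π) * #{w ∈ s | π w = π v} := by
    rw [card_eq_sum_card_image π s, sum_const_nat fiber_eq]
  have sum_eq : ∑ u ∈ s, h (π u) = #{w ∈ s | π w = π v} * ∑ p ∈ s.image π, h p := by
    rw [sum_comp, mul_sum]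
    exact sum_congr rfl fun p hp => by rw [fiber_eq p hp, nsmul_eq_mul]
  have fiber_ne : (#{w ∈ s | π w = π v} : ℝ) ≠ 0 :=
    Nat.cast_ne_zero.mpr (card_ne_zero_of_mem (mem_filter.mpr ⟨hv, rfl⟩))
  rw [expect_eq_sum_div_card, expect_eq_sum_div_card, sum_eq, card_eq, Nat.cast_mul,
    mul_comm (#(s.image π) : ℝ), mul_div_mul_left _ _ fiber_ne]

theorem expect_mul_le_iff (s : Finset Ω) (f g : Ω → ℝ) (ε : ℝ) :
    𝔼 u ∈ s, f u * g u ≤ ε * (√(𝔼 u ∈ s, f u ^ 2) * √(𝔼 u ∈ s, g u ^ 2)) ↔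
      ∑ u ∈ s, f u * g u ≤ ε * (√(∑ u ∈ s, f u ^ 2) * √(∑ u ∈ s, g u ^ 2)) := by
  obtain rfl | hs := s.eq_empty_or_nonempty
  · simp
  have hcard : (0 : ℝ) < #s := Nat.cast_pos.mpr hs.card_pos
  simp only [expect_eq_sum_div_card]
  rw [Real.sqrt_div' _ hcard.le, Real.sqrt_div' _ hcard.le, div_mul_div_comm,
    Real.mul_self_sqrt hcard.le, ← mul_div_assoc, div_le_div_iff_of_pos_right hcard]

end Averages

section Coordinates

variable {ι Ω α : Type*} (X : ι → Ω → α)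

/-- The functions on `Ω` that depend only on the coordinates `X i`, `i ∈ B`. -/
def coordFunctions (B : Finset ι) : Submodule ℝ (EuclideanSpace ℝ Ω) where
  carrier := {f | ∀ u v, (∀ i ∈ B, X i u = X i v) → f u = f v}
  add_mem' hf hg u v h := by simp [hf u v h, hg u v h]
  zero_mem' _ _ _ := rfl
  smul_mem' c f hf u v h := by simp [hf u v h]

variable {X} in
theorem coordFunctions_mono : Monotone (coordFunctions X) :=
  fun _ _ hBB' _ hf u v h => hf u v fun i hi => h i (hBB' hi)

variable [Fintype Ω]

/-- The points of `Ω` that have the same coordinates `X i`, `i ∈ B`, as `v`. -/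
noncomputable def coordCell (B : Finset ι) (v : Ω) : Finset Ω := {u | ∀ i ∈ B, X i u = X i v}

/-- For the uniform distribution on `Ω`, all possible values of the coordinates `X i`, `i ∈ B`,
are equally likely. -/
def HomogeneousCoords : Prop :=
  ∀ B u v, #(coordCell X B u) = #(coordCell X B v)

variable {X} {B c c' : Finset ι} {a b : ι} {f g : EuclideanSpace ℝ Ω} {u v : Ω}

theorem mem_coordCell : u ∈ coordCell X B v ↔ ∀ i ∈ B, X i u = X i v := by
  simp [coordCell]

theorem mem_coordCell_self (B : Finset ι) (v : Ω) : v ∈ coordCell X B v :=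
  mem_coordCell.mpr fun _ _ => rfl

theorem coordCell_eq_coordCell_iff :
    coordCell X B u = coordCell X B v ↔ u ∈ coordCell X B v := by
  refine ⟨fun h => h ▸ mem_coordCell_self B u, fun h => ?_⟩
  ext w
  rw [mem_coordCell] at h
  simp +contextual only [mem_coordCell, h]

theorem sum_eq_sum_coordCell (B : Finset ι) (h : Ω → ℝ) :
    ∑ u, h u = ∑ C ∈ univ.image (coordCell X B), ∑ u ∈ C, h u := by
  rw [← sum_fiberwise_of_maps_to (fun u _ => mem_image_of_mem (coordCell X B) (mem_univ u))]
  refine sum_congr rfl (forall_mem_image.mpr fun v _ => sum_congr ?_ fun _ _ => rfl)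
  ext u
  simp only [mem_filter_univ, coordCell_eq_coordCell_iff]

theorem mem_orthogonal_coordFunctions :
    f ∈ (coordFunctions X B)ᗮ ↔ ∀ v, 𝔼 u ∈ coordCell X B v, f u = 0 := by
  rw [Submodule.mem_orthogonal]
  constructor
  · intro hf v
    have hind := hf (WithLp.toLp 2 fun u => if u ∈ coordCell X B v then 1 else 0) fun u w huw => by
      simp +contextual only [mem_coordCell, huw]
    rw [expect_eq_sum_div_card, div_eq_zero_iff]
    exact Or.inl (by simpa [PiLp.inner_apply] using hind)
  · intro hf g hg
    rw [PiLp.inner_apply, sum_eq_sum_coordCell (X := X) B]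
    refine sum_eq_zero (forall_mem_image.mpr fun v _ => ?_)
    calc ∑ u ∈ coordCell X B v, inner ℝ (g u) (f u)
        = ∑ u ∈ coordCell X B v, f u * g v := sum_congr rfl fun u hu => by
          rw [hg u v (mem_coordCell.mp hu)]; rfl
      _ = 0 := by rw [← sum_mul, ← card_mul_expect, hf v, mul_zero, zero_mul]

theorem inner_le_of_forall_coordCell (B : Finset ι) {ε : ℝ} (hε : 0 ≤ ε)
    (h : ∀ v, 𝔼 u ∈ coordCell X B v, f u * g u ≤
      ε * (√(𝔼 u ∈ coordCell X B v, f u ^ 2) * √(𝔼 u ∈ coordCell X B v, g u ^ 2))) :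
    inner ℝ f g ≤ ε * (‖f‖ * ‖g‖) := by
  calc inner ℝ f g = ∑ u, f u * g u := by simp [PiLp.inner_apply, mul_comm]
    _ = ∑ C ∈ univ.image (coordCell X B), ∑ u ∈ C, f u * g u := sum_eq_sum_coordCell B _
    _ ≤ ∑ C ∈ univ.image (coordCell X B), ε * (√(∑ u ∈ C, f u ^ 2) * √(∑ u ∈ C, g u ^ 2)) :=
        sum_le_sum (forall_mem_image.mpr fun v _ => (expect_mul_le_iff ..).mp (h v))
    _ ≤ ε * (√(∑ C ∈ univ.image (coordCell X B), ∑ u ∈ C, f u ^ 2) *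
          √(∑ C ∈ univ.image (coordCell X B), ∑ u ∈ C, g u ^ 2)) := by
        rw [← mul_sum]
        gcongr
        exact Real.sum_sqrt_mul_sqrt_le _ (fun C => sum_nonneg fun u _ => sq_nonneg _)
          fun C => sum_nonneg fun u _ => sq_nonneg _
    _ = ε * (‖f‖ * ‖g‖) := by
        simp only [← sum_eq_sum_coordCell, EuclideanSpace.norm_eq, Real.norm_eq_abs, sq_abs]

theorem filter_coordCell_eq [DecidableEq ι] (B D : Finset ι) (hu : u ∈ coordCell X B v) :
    {w ∈ coordCell X B v | ∀ i ∈ D, X i w = X i u} = coordCell X (B ∪ D) u := by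
  rw [← coordCell_eq_coordCell_iff.mpr hu]
  ext w
  simp only [mem_filter, mem_coordCell, mem_union, or_imp, forall_and]

theorem HomogeneousCoords.expect_comp (hX : HomogeneousCoords X) (B : Finset ι) (v : Ω)
    {β : Type*} [DecidableEq β] {π : Ω → β} (D : Finset ι)
    (hπ : ∀ u w, π u = π w ↔ ∀ i ∈ D, X i u = X i w) (h : β → ℝ) :
    𝔼 u ∈ coordCell X B v, h (π u) = 𝔼 p ∈ (coordCell X B v).image π, h p :=
  expect_comp_of_card_fiber (fun u hu w hw => by
    simp only [hπ, filter_coordCell_eq B D hu, filter_coordCell_eq B D hw, hX _ u w]) h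

theorem HomogeneousCoords.expect_comp_coord [DecidableEq α] (hX : HomogeneousCoords X)
    (B : Finset ι) (v : Ω) (a : ι) (φ : α → ℝ) :
    𝔼 u ∈ coordCell X B v, φ (X a u) = 𝔼 x ∈ (coordCell X B v).image (X a), φ x :=
  hX.expect_comp B v {a} (by simp) φ

theorem HomogeneousCoords.expect_comp_coord_pair [DecidableEq α] (hX : HomogeneousCoords X)
    (B : Finset ι) (v : Ω) (a b : ι) (φ : α × α → ℝ) :
    𝔼 u ∈ coordCell X B v, φ (X a u, X b u) =
      𝔼 p ∈ (coordCell X B v).image (fun u => (X a u, X b u)), φ p :=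
  hX.expect_comp B v (π := fun u => (X a u, X b u)) {a, b} (by simp) φ

variable [DecidableEq ι]

theorem CorrelationBound.expect_coordCell_le {ε : ℝ}
    (h : CorrelationBound (coordFunctions X) c c' ε) {f g : Ω → ℝ}
    (hf : ∀ u v, (∀ i ∈ c, X i u = X i v) → f u = f v)
    (hg : ∀ u v, (∀ i ∈ c', X i u = X i v) → g u = g v)
    (hf0 : 𝔼 u ∈ coordCell X B v, f u = 0) (hg0 : 𝔼 u ∈ coordCell X B v, g u = 0) :
    𝔼 u ∈ coordCell X B v, f u * g u ≤
      ε * (√(𝔼 u ∈ coordCell X B v, f u ^ 2) * √(𝔼 u ∈ coordCell X B v, g u ^ 2)) := by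
  set C := coordCell X B v
  let restrict (f : Ω → ℝ) : EuclideanSpace ℝ Ω := WithLp.toLp 2 fun u => if u ∈ C then f u else 0
  have restrict_mem (f : Ω → ℝ) (c : Finset ι) (hf : ∀ u w, (∀ i ∈ c, X i u = X i w) → f u = f w) :
      restrict f ∈ coordFunctions X (B ∪ c) := fun u w huw => by
    simp only [mem_union, or_imp, forall_and] at huw
    simp +contextual only [restrict, C, mem_coordCell, huw.1, hf u w huw.2]
  have restrict_mem_orthogonal (f : Ω → ℝ) (hf : 𝔼 u ∈ C, f u = 0) :
      restrict f ∈ (coordFunctions X B)ᗮ := mem_orthogonal_coordFunctions.mpr fun w => by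
    by_cases hw : w ∈ C
    · rw [coordCell_eq_coordCell_iff.mpr hw, ← hf]
      exact expect_congr rfl fun u hu => if_pos hu
    · refine expect_eq_zero fun u hu => if_neg fun huC => hw ?_
      rwa [← coordCell_eq_coordCell_iff, ← coordCell_eq_coordCell_iff.mpr hu,
        coordCell_eq_coordCell_iff]
  have key := h B _ (restrict_mem f c hf) (restrict_mem_orthogonal f hf0) _ (restrict_mem g c' hg)
    (restrict_mem_orthogonal g hg0)
  rw [expect_mul_le_iff]
  simpa [restrict, PiLp.inner_apply, EuclideanSpace.norm_eq, ite_pow, mul_comm] using key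

theorem exists_eq_comp_of_mem_coordFunctions (hf : f ∈ coordFunctions X (B ∪ {a})) (v : Ω) :
    ∃ φ : α → ℝ, ∀ u ∈ coordCell X B v, f u = φ (X a u) := by
  have hfac : (fun u : coordCell X B v => f u).FactorsThrough fun u => X a u := fun u w h =>
    hf u w fun i hi => by
      obtain hi | hi := mem_union.mp hi
      · exact (mem_coordCell.mp u.2 i hi).trans (mem_coordCell.mp w.2 i hi).symm
      · rwa [mem_singleton.mp hi]
  exact ⟨_, fun u hu => (hfac.extend_apply 0 ⟨u, hu⟩).symm⟩

/-- If the coordinates `a` and `b` can be chosen freely once those in `B` are fixed, then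
`X a` and `X b` are conditionally independent given the coordinates in `B`. -/
theorem HomogeneousCoords.inner_eq_zero_of_exchange (hX : HomogeneousCoords X)
    (hex : ∀ v, ∀ u ∈ coordCell X B v, ∃ w ∈ coordCell X B v, X a w = X a u ∧ X b w = X b v)
    (hf : f ∈ coordFunctions X (B ∪ {a})) (hfB : f ∈ (coordFunctions X B)ᗮ)
    (hg : g ∈ coordFunctions X (B ∪ {b})) : inner ℝ f g = 0 := by
  rw [PiLp.inner_apply, sum_eq_sum_coordCell (X := X) B]
  refine sum_eq_zero (forall_mem_image.mpr fun v _ => ?_)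
  set C := coordCell X B v with hC
  obtain ⟨φ, hφ⟩ := exists_eq_comp_of_mem_coordFunctions hf v
  obtain ⟨ψ, hψ⟩ := exists_eq_comp_of_mem_coordFunctions hg v
  have image_eq : C.image (fun u => (X a u, X b u)) = C.image (X a) ×ˢ C.image (X b) := by
    refine (image_subset_iff.mpr fun u hu => ?_).antisymm fun p hp => ?_
    · exact mk_mem_product (mem_image_of_mem _ hu) (mem_image_of_mem _ hu)
    · obtain ⟨⟨u, hu, hup⟩, w, hw, hwp⟩ := by simpa only [mem_product, mem_image] using hp
      rw [hC, ← coordCell_eq_coordCell_iff.mpr hw] at hu ⊢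
      obtain ⟨z, hz, hza, hzb⟩ := hex w u hu
      exact mem_image.mpr ⟨z, hz, Prod.ext (hza.trans hup) (hzb.trans hwp)⟩
  have hφ0 : 𝔼 x ∈ C.image (X a), φ x = 0 := by
    rw [← hX.expect_comp_coord, ← mem_orthogonal_coordFunctions.mp hfB v]
    exact expect_congr rfl fun u hu => (hφ u hu).symm
  have hfg : 𝔼 u ∈ C, inner ℝ (f u) (g u) = 0 := calc
    _ = 𝔼 u ∈ C, φ (X a u) * ψ (X b u) := expect_congr rfl fun u hu => by
      rw [hφ u hu, hψ u hu, mul_comm]; rfl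
    _ = 𝔼 p ∈ C.image (X a) ×ˢ C.image (X b), φ p.1 * ψ p.2 := by
      rw [hX.expect_comp_coord_pair B v a b fun p => φ p.1 * ψ p.2, image_eq]
    _ = (𝔼 x ∈ C.image (X a), φ x) * 𝔼 y ∈ C.image (X b), ψ y := by
      rw [expect_product, expect_mul_expect]
    _ = 0 := by rw [hφ0, zero_mul]
  rw [← card_mul_expect, hfg, mul_zero]

end Coordinates

section CommonCovers

variable {α : Type*} [Lattice α] {a b c : α}

theorem covBy_and_covBy_iff_eq_inf (hab : a ≠ b) :
    c ⋖ a ∧ c ⋖ b ↔ c = a ⊓ b ∧ a ⊓ b ⋖ a ∧ a ⊓ b ⋖ b := by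
  refine ⟨fun ⟨hca, hcb⟩ => ?_, fun ⟨hc, ha, hb⟩ => hc ▸ ⟨ha, hb⟩⟩
  obtain rfl : c = a ⊓ b := by
    refine (hca.eq_or_eq (le_inf hca.le hcb.le) inf_le_left).elim Eq.symm fun h => ?_
    exact absurd (hcb.eq_or_eq hca.le (inf_eq_left.mp h)) (by simp [hab, hca.ne'])
  exact ⟨rfl, hca, hcb⟩

variable [IsModularLattice α]

theorem covBy_and_covBy_iff_eq_sup (hab : a ≠ b) :
    a ⋖ c ∧ b ⋖ c ↔ c = a ⊔ b ∧ a ⊓ b ⋖ a ∧ a ⊓ b ⋖ b := by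
  constructor
  · rintro ⟨hac, hbc⟩
    obtain rfl : c = a ⊔ b := by
      refine (hac.eq_or_eq le_sup_left (sup_le hac.le hbc.le)).elim (fun h => ?_) Eq.symm
      exact absurd (hbc.eq_or_eq (sup_eq_left.mp h) hac.le) (by simp [hab, hac.ne])
    exact ⟨rfl, inf_covBy_of_covBy_sup_right hbc, inf_covBy_of_covBy_sup_left hac⟩
  · rintro ⟨rfl, ha, hb⟩
    exact ⟨covBy_sup_of_inf_covBy_right hb, covBy_sup_of_inf_covBy_left ha⟩

theorem card_common_upper_covers_eq_card_common_lower_covers [Fintype α] (hab : a ≠ b) :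
    #{c | a ⋖ c ∧ b ⋖ c} = #{c | c ⋖ a ∧ c ⋖ b} := by
  rw [filter_congr fun c _ => covBy_and_covBy_iff_eq_sup hab,
    filter_congr fun c _ => covBy_and_covBy_iff_eq_inf hab]
  by_cases h : a ⊓ b ⋖ a ∧ a ⊓ b ⋖ b <;> simp [card_filter, h]

end CommonCovers

section SubspaceCovers

variable {F V : Type*} [Field F] [AddCommGroup V] [Module F V]

theorem covBy_iff_finrank_add_one_eq [FiniteDimensional F V] {A B : Submodule F V} (h : A ≤ B) :
    A ⋖ B ↔ finrank F A + 1 = finrank F B := by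
  have hquot := Submodule.finrank_quotient_add_finrank (A.submoduleOf B)
  rw [(Submodule.submoduleOfEquivOfLe h).finrank_eq] at hquot
  rw [covBy_iff_quot_is_simple h, isSimpleModule_iff_finrank_eq_one]
  change finrank F (B ⧸ A.submoduleOf B) = 1 ↔ _
  omega

theorem card_atoms [Finite F] :
    Nat.card {P : Submodule F V // IsAtom P} = ∑ i ∈ range (finrank F V), Nat.card F ^ i := by
  rw [← Projectivization.card_of_finrank F V rfl]
  exact Nat.card_congr ((Equiv.subtypeEquivRight fun _ =>
    Submodule.isAtom_iff_finrank_eq_one).trans (Projectivization.equivSubmodule F V).symm)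

theorem card_covBy [Finite F] (A : Submodule F V) :
    Nat.card {B // A ⋖ B} = ∑ i ∈ range (finrank F (V ⧸ A)), Nat.card F ^ i := by
  rw [← card_atoms]
  refine Nat.card_congr (Equiv.trans ?_ ((Submodule.comapMkQRelIso A).toEquiv.subtypeEquiv
    fun P => (OrderIso.isAtom_iff (Submodule.comapMkQRelIso A) P).symm).symm)
  exact {
    toFun B := ⟨⟨B, B.2.le⟩, (covBy_iff_atom_Ici B.2.le).mp B.2⟩
    invFun x := ⟨x.1, (covBy_iff_atom_Ici x.1.2).mpr x.2⟩ }

theorem card_covBy_and_le [Finite F] [FiniteDimensional F V] {A U : Submodule F V} {i : ℕ}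
    (h : A ≤ U) (hi : finrank F A + i = finrank F U) :
    Nat.card {B // A ⋖ B ∧ B ≤ U} = ∑ j ∈ range i, Nat.card F ^ j := by
  have hquot := Submodule.finrank_quotient_add_finrank (A.submoduleOf U)
  rw [(Submodule.submoduleOfEquivOfLe h).finrank_eq] at hquot
  rw [show i = finrank F (U ⧸ A.submoduleOf U) by omega, ← card_covBy]
  refine Nat.card_congr (.symm (((Submodule.mapIic U).toEquiv.subtypeEquiv
    (q := fun B : Set.Iic U => A ⋖ B.1) fun B => ?_).trans
    ((Equiv.subtypeSubtypeEquivSubtypeInter (· ≤ U) (A ⋖ ·)).trans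
      (Equiv.subtypeEquivRight fun _ => and_comm))))
  have hA : Submodule.mapIic U (A.submoduleOf U) = ⟨A, h⟩ := Subtype.ext <|
    (Submodule.map_comap_subtype U A).trans (inf_eq_right.mpr h)
  rw [← apply_covBy_apply_iff (Submodule.mapIic U), hA]
  exact (Set.OrdConnected.apply_covBy_apply_iff (OrderEmbedding.subtype (· ∈ Set.Iic U))
    (Subtype.range_coe.symm ▸ Set.ordConnected_Iic)).symm

theorem card_le_and_covBy [Finite F] [FiniteDimensional F V] {L A : Submodule F V} {i : ℕ}
    (h : L ≤ A) (hi : finrank F L + i = finrank F A) :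
    Nat.card {B // L ≤ B ∧ B ⋖ A} = ∑ j ∈ range i, Nat.card F ^ j := by
  let e := Subspace.orderIsoFiniteDimensional (K := F) (V := V)
  have hL := Subspace.finrank_add_finrank_dualAnnihilator_eq L
  have hA := Subspace.finrank_add_finrank_dualAnnihilator_eq A
  rw [← card_covBy_and_le (Submodule.dualAnnihilator_anti h) (i := i) (by omega)]
  refine Nat.card_congr ((e.toEquiv.trans OrderDual.ofDual).subtypeEquiv fun B => ?_)
  rw [and_comm, ← apply_covBy_apply_iff e, ← e.le_iff_le, ← ofDual_covBy_ofDual_iff,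
    ← OrderDual.ofDual_le_ofDual]
  rfl

end SubspaceCovers

section BipartiteSums

variable {α β γ : Type*} {s : Finset α} {t : Finset β} {t' : Finset γ} {R : α → β → Prop}
  {R' : α → γ → Prop}

theorem sum_sum_filter_mul (s : Finset α) (t : Finset β) (R : α → β → Prop) (f : α → ℝ)
    (g : β → ℝ) :
    ∑ b ∈ t, (∑ a ∈ s with R a b, f a) * g b = ∑ a ∈ s, f a * ∑ b ∈ t with R a b, g b := by
  simp_rw [sum_mul, mul_sum]
  exact sum_comm' fun b a => by simp only [mem_filter]; tauto

theorem sum_sum_filter_eq_mul_sum {m : ℕ} (hR : ∀ a ∈ s, #{b ∈ t | R a b} = m) (f : α → ℝ) :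
    ∑ b ∈ t, ∑ a ∈ s with R a b, f a = m * ∑ a ∈ s, f a := by
  have := sum_sum_filter_mul s t R f 1
  simp only [Pi.one_apply, mul_one, sum_const, nsmul_one] at this
  rw [this, mul_sum]
  exact sum_congr rfl fun a ha => by rw [hR a ha, mul_comm]

theorem sum_sq_sum_filter (s : Finset α) (t : Finset β) (R : α → β → Prop) (f : α → ℝ) :
    ∑ b ∈ t, (∑ a ∈ s with R a b, f a) ^ 2 =
      ∑ a ∈ s, ∑ a' ∈ s, f a * f a' * #{b ∈ t | R a b ∧ R a' b} := by
  simp_rw [sq, sum_sum_filter_mul s t R f, mul_sum]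
  refine sum_congr rfl fun a _ => ?_
  rw [sum_comm' (t' := s) (s' := fun a' => {b ∈ t | R a b ∧ R a' b})
    fun b a' => by simp only [mem_filter]; tauto]
  simp [mul_comm]

theorem sum_sq_sum_filter_eq_add {m m' : ℕ} (hR : ∀ a ∈ s, #{b ∈ t | R a b} = m)
    (hR' : ∀ a ∈ s, #{c ∈ t' | R' a c} = m')
    (hRR' : ∀ a ∈ s, ∀ a' ∈ s, a ≠ a' →
      #{b ∈ t | R a b ∧ R a' b} = #{c ∈ t' | R' a c ∧ R' a' c})
    (f : α → ℝ) :
    ∑ b ∈ t, (∑ a ∈ s with R a b, f a) ^ 2 =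
      ∑ c ∈ t', (∑ a ∈ s with R' a c, f a) ^ 2 + (m - m') * ∑ a ∈ s, f a ^ 2 := by
  rw [sum_sq_sum_filter, sum_sq_sum_filter, mul_sum, ← sum_add_distrib]
  refine sum_congr rfl fun a ha => ?_
  rw [← sum_erase_add _ _ ha, ← sum_erase_add s _ ha]
  simp only [and_self, hR a ha, hR' a ha]
  rw [sum_congr rfl fun a' ha' => by
    rw [hRR' a ha a' (mem_of_mem_erase ha') (ne_of_mem_erase ha').symm]]
  ring

/-- An operator and its adjoint have the same norm. -/
theorem sum_sq_sum_filter_le_of_adjoint {C : ℝ} (hC : 0 ≤ C) {g : β → ℝ}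
    (h : ∑ b ∈ t, (∑ a ∈ s with R a b, ∑ b' ∈ t with R a b', g b') ^ 2 ≤
      C * ∑ a ∈ s, (∑ b ∈ t with R a b, g b) ^ 2) :
    ∑ a ∈ s, (∑ b ∈ t with R a b, g b) ^ 2 ≤ C * ∑ b ∈ t, g b ^ 2 := by
  set N := ∑ a ∈ s, (∑ b ∈ t with R a b, g b) ^ 2 with hN
  have cauchy_schwarz : N ^ 2 ≤ C * N * ∑ b ∈ t, g b ^ 2 := calc
    N ^ 2 = (∑ b ∈ t, (∑ a ∈ s with R a b, ∑ b' ∈ t with R a b', g b') * g b) ^ 2 := by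
      simp only [sum_sum_filter_mul, ← sq, hN]
    _ ≤ _ := sum_mul_sq_le_sq_mul_sq ..
    _ ≤ _ := by gcongr
  obtain hN0 | hN0 : N = 0 ∨ 0 < N := (sum_nonneg fun a _ => sq_nonneg _).eq_or_lt.imp Eq.symm id
  · rw [hN0]; positivity
  · nlinarith

end BipartiteSums

section GrassmannWalk

variable {F V : Type*} [Field F] [AddCommGroup V] [Module F V] [Fintype (Submodule F V)]
  {L U A A' B : Submodule F V} {i j k : ℕ}

/-- The vertices at level `k` of the Grassmann graph between `L` and `U`: the `k`-dimensional
subspaces `A` with `L ≤ A ≤ U`. -/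
noncomputable def grassmannian (L U : Submodule F V) (k : ℕ) : Finset (Submodule F V) :=
  {A | L ≤ A ∧ A ≤ U ∧ finrank F A = k}

/-- The edges of the Grassmann graph between levels `k` and `k + 1`. -/
noncomputable def grassmannEdges (L U : Submodule F V) (k : ℕ) :
    Finset (Submodule F V × Submodule F V) :=
  {p ∈ grassmannian L U k ×ˢ grassmannian L U (k + 1) | p.1 ≤ p.2}

theorem mem_grassmannian : A ∈ grassmannian L U k ↔ L ≤ A ∧ A ≤ U ∧ finrank F A = k := by
  simp [grassmannian]

theorem sum_grassmannEdges (f : Submodule F V → Submodule F V → ℝ) :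
    ∑ p ∈ grassmannEdges L U k, f p.1 p.2 =
      ∑ A ∈ grassmannian L U k, ∑ B ∈ grassmannian L U (k + 1) with A ≤ B, f A B :=
  sum_finset_product (f := fun p => f p.1 p.2) _ _ _ fun p => by
    simp only [grassmannEdges, mem_filter, mem_product, and_assoc]

variable [FiniteDimensional F V]

theorem mem_grassmannian_succ_and_le_iff (hA : A ∈ grassmannian L U k) :
    B ∈ grassmannian L U (k + 1) ∧ A ≤ B ↔ A ⋖ B ∧ B ≤ U := by
  obtain ⟨hLA, -, hA⟩ := mem_grassmannian.mp hA
  rw [mem_grassmannian]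
  constructor
  · rintro ⟨⟨-, hBU, hB⟩, hAB⟩
    exact ⟨(covBy_iff_finrank_add_one_eq hAB).mpr (by rw [hA, hB]), hBU⟩
  · rintro ⟨hAB, hBU⟩
    exact ⟨⟨hLA.trans hAB.le, hBU, by rw [← (covBy_iff_finrank_add_one_eq hAB.le).mp hAB, hA]⟩,
      hAB.le⟩

theorem mem_grassmannian_and_le_iff (hA : A ∈ grassmannian L U (k + 1)) :
    B ∈ grassmannian L U k ∧ B ≤ A ↔ L ≤ B ∧ B ⋖ A := by
  obtain ⟨-, hAU, hA⟩ := mem_grassmannian.mp hA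
  rw [mem_grassmannian]
  constructor
  · rintro ⟨⟨hLB, -, hB⟩, hBA⟩
    exact ⟨hLB, (covBy_iff_finrank_add_one_eq hBA).mpr (by rw [hA, hB])⟩
  · rintro ⟨hLB, hBA⟩
    have := (covBy_iff_finrank_add_one_eq hBA.le).mp hBA
    exact ⟨⟨hLB, hBA.le.trans hAU, by omega⟩, hBA.le⟩

theorem card_grassmannian_common_neighbors (hA : A ∈ grassmannian L U (k + 1))
    (hA' : A' ∈ grassmannian L U (k + 1)) (hne : A ≠ A') :
    #{B ∈ grassmannian L U (k + 2) | A ≤ B ∧ A' ≤ B} =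
      #{B ∈ grassmannian L U k | B ≤ A ∧ B ≤ A'} := by
  have upper (B) : (B ∈ grassmannian L U (k + 2) ∧ A ≤ B ∧ A' ≤ B) ↔ A ⋖ B ∧ A' ⋖ B := by
    have h := mem_grassmannian_succ_and_le_iff (B := B) hA
    have h' := mem_grassmannian_succ_and_le_iff (B := B) hA'
    have hU : A ⋖ B ∧ A' ⋖ B → B ≤ U := fun hB => by
      rw [((covBy_and_covBy_iff_eq_sup hne).mp hB).1]
      exact sup_le (mem_grassmannian.mp hA).2.1 (mem_grassmannian.mp hA').2.1
    tauto
  have lower (B) : (B ∈ grassmannian L U k ∧ B ≤ A ∧ B ≤ A') ↔ B ⋖ A ∧ B ⋖ A' := by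
    have h := mem_grassmannian_and_le_iff (B := B) hA
    have h' := mem_grassmannian_and_le_iff (B := B) hA'
    have hL : B ⋖ A ∧ B ⋖ A' → L ≤ B := fun hB => by
      rw [((covBy_and_covBy_iff_eq_inf hne).mp hB).1]
      exact le_inf (mem_grassmannian.mp hA).1 (mem_grassmannian.mp hA').1
    tauto
  calc #{B ∈ grassmannian L U (k + 2) | A ≤ B ∧ A' ≤ B}
      = #{B | A ⋖ B ∧ A' ⋖ B} := by congr 1; ext B; rw [mem_filter, mem_filter_univ, upper]
    _ = #{B | B ⋖ A ∧ B ⋖ A'} := card_common_upper_covers_eq_card_common_lower_covers hne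
    _ = _ := by congr 1; ext B; rw [mem_filter_univ, mem_filter, lower]

variable [Finite F]

theorem card_grassmannian_upper_neighbors (hj : k + j = finrank F U)
    (hA : A ∈ grassmannian L U k) :
    #{B ∈ grassmannian L U (k + 1) | A ≤ B} = ∑ t ∈ range j, Nat.card F ^ t := by
  obtain ⟨-, hAU, hAk⟩ := mem_grassmannian.mp hA
  rw [← card_covBy_and_le hAU (by rw [hAk, hj]), Nat.card_eq_fintype_card, Fintype.card_subtype]
  congr 1
  ext B
  rw [mem_filter, mem_filter_univ, mem_grassmannian_succ_and_le_iff hA]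

theorem card_grassmannian_lower_neighbors (hi : finrank F L + i = k + 1)
    (hA : A ∈ grassmannian L U (k + 1)) :
    #{B ∈ grassmannian L U k | B ≤ A} = ∑ t ∈ range i, Nat.card F ^ t := by
  obtain ⟨hLA, -, hAk⟩ := mem_grassmannian.mp hA
  rw [← card_le_and_covBy hLA (by rw [hAk, hi]), Nat.card_eq_fintype_card, Fintype.card_subtype]
  congr 1
  ext B
  rw [mem_filter, mem_filter_univ, mem_grassmannian_and_le_iff hA]

/-- The induction goes up through the levels: going up from level `k` and coming back differs
from going down and coming back by a scalar, and going down is the adjoint of going up one level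
below. -/
theorem sum_sq_sum_grassmannian_le (hi : finrank F L + i = k) (hj : k + 1 + j = finrank F U)
    {f : Submodule F V → ℝ} (hf : ∑ A ∈ grassmannian L U k, f A = 0) :
    ∑ B ∈ grassmannian L U (k + 1), (∑ A ∈ grassmannian L U k with A ≤ B, f A) ^ 2 ≤
      Nat.card F * (∑ t ∈ range i, (Nat.card F : ℝ) ^ t) * (∑ t ∈ range j, (Nat.card F : ℝ) ^ t) *
        ∑ A ∈ grassmannian L U k, f A ^ 2 := by
  induction i generalizing j k f with
  | zero =>
    have eq_L {A} (hA : A ∈ grassmannian L U k) : A = L := by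
      obtain ⟨hLA, -, hAk⟩ := mem_grassmannian.mp hA
      exact (Submodule.eq_of_le_of_finrank_eq hLA (by omega)).symm
    refine (sum_eq_zero fun B hB => ?_).trans_le (by simp)
    rw [filter_true_of_mem fun A hA => (eq_L hA).trans_le (mem_grassmannian.mp hB).1, hf, sq,
      zero_mul]
  | succ i ih =>
    obtain ⟨k, rfl⟩ : ∃ k', k = k' + 1 := ⟨finrank F L + i, by omega⟩
    have up_card A (hA : A ∈ grassmannian L U (k + 1)) :=
      card_grassmannian_upper_neighbors (j := j + 1) (by omega) hA
    have down_card A (hA : A ∈ grassmannian L U (k + 1)) :=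
      card_grassmannian_lower_neighbors (i := i + 1) (by omega) hA
    have down_le : ∑ B ∈ grassmannian L U k, (∑ A ∈ grassmannian L U (k + 1) with B ≤ A, f A) ^ 2 ≤
        Nat.card F * (∑ t ∈ range i, (Nat.card F : ℝ) ^ t) *
          (∑ t ∈ range (j + 1), (Nat.card F : ℝ) ^ t) *
          ∑ A ∈ grassmannian L U (k + 1), f A ^ 2 := by
      refine sum_sq_sum_filter_le_of_adjoint (by positivity) (ih (by omega) (by omega) ?_)
      rw [sum_sum_filter_eq_mul_sum down_card, hf, mul_zero]
    rw [sum_sq_sum_filter_eq_add up_card down_card fun A hA A' hA' hne =>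
      card_grassmannian_common_neighbors hA hA' hne]
    refine (add_le_add_left down_le _).trans_eq ?_
    push_cast
    rw [geom_sum_succ, geom_sum_succ]
    ring

theorem sum_grassmannEdges_fst (hj : k + j = finrank F U) (h : Submodule F V → ℝ) :
    ∑ p ∈ grassmannEdges L U k, h p.1 =
      (∑ t ∈ range j, (Nat.card F : ℝ) ^ t) * ∑ A ∈ grassmannian L U k, h A := by
  rw [sum_grassmannEdges fun A _ => h A, mul_sum]
  refine sum_congr rfl fun A hA => ?_
  rw [sum_const, nsmul_eq_mul, card_grassmannian_upper_neighbors hj hA]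
  push_cast
  rfl

theorem sum_grassmannEdges_snd (hi : finrank F L + i = k + 1) (h : Submodule F V → ℝ) :
    ∑ p ∈ grassmannEdges L U k, h p.2 =
      (∑ t ∈ range i, (Nat.card F : ℝ) ^ t) * ∑ B ∈ grassmannian L U (k + 1), h B := by
  rw [sum_grassmannEdges fun _ B => h B,
    sum_sum_filter_eq_mul_sum fun B hB => card_grassmannian_lower_neighbors hi hB]
  push_cast
  rfl

theorem sum_grassmannEdges_mul_le (hi : finrank F L + i = k) (hj : k + 1 + j = finrank F U)
    {φ : Submodule F V → ℝ} (hφ : ∑ p ∈ grassmannEdges L U k, φ p.1 = 0)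
    (ψ : Submodule F V → ℝ) :
    ∑ p ∈ grassmannEdges L U k, φ p.1 * ψ p.2 ≤ (√(Nat.card F))⁻¹ *
      (√(∑ p ∈ grassmannEdges L U k, φ p.1 ^ 2) * √(∑ p ∈ grassmannEdges L U k, ψ p.2 ^ 2)) := by
  have sum_fst := sum_grassmannEdges_fst (F := F) (L := L) (U := U) (k := k) (j := j + 1) (by omega)
  have sum_snd := sum_grassmannEdges_snd (F := F) (L := L) (U := U) (k := k) (i := i + 1) (by omega)
  have sum_mul : ∑ p ∈ grassmannEdges L U k, φ p.1 * ψ p.2 =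
      ∑ B ∈ grassmannian L U (k + 1), (∑ A ∈ grassmannian L U k with A ≤ B, φ A) * ψ B := by
    rw [sum_grassmannEdges fun A B => φ A * ψ B, sum_sum_filter_mul]
    simp only [mul_sum]
  have hφ0 : ∑ A ∈ grassmannian L U k, φ A = 0 := by
    rw [sum_fst] at hφ
    exact (mul_eq_zero.mp hφ).resolve_left (by rw [geom_sum_succ]; positivity)
  rw [← Real.sqrt_inv, ← Real.sqrt_mul (by positivity), ← Real.sqrt_mul (by positivity), sum_mul,
    sum_fst fun A => φ A ^ 2, sum_snd fun B => ψ B ^ 2, geom_sum_succ, geom_sum_succ]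
  apply Real.le_sqrt_of_sq_le
  set N := ∑ t ∈ range i, (Nat.card F : ℝ) ^ t
  set M := ∑ t ∈ range j, (Nat.card F : ℝ) ^ t
  set x := ∑ A ∈ grassmannian L U k, φ A ^ 2
  set y := ∑ B ∈ grassmannian L U (k + 1), ψ B ^ 2
  have hq : (Nat.card F : ℝ) ≠ 0 := Nat.cast_ne_zero.mpr Nat.card_pos.ne'
  calc _ ≤ (∑ B ∈ grassmannian L U (k + 1), (∑ A ∈ grassmannian L U k with A ≤ B, φ A) ^ 2) * y :=
        sum_mul_sq_le_sq_mul_sq ..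
    _ ≤ Nat.card F * N * M * x * y := by gcongr; exact sum_sq_sum_grassmannian_le hi hj hφ0
    _ = (Nat.card F : ℝ)⁻¹ * ((Nat.card F * M) * x * ((Nat.card F * N) * y)) := by field_simp
    _ ≤ (Nat.card F : ℝ)⁻¹ * ((Nat.card F * M + 1) * x * ((Nat.card F * N + 1) * y)) := by
        gcongr <;> exact (lt_add_one _).le

end GrassmannWalk

section FlagSpan

variable {F V : Type*} [Field F] [AddCommGroup V] [Module F V] {n : ℕ}

/-- The `t`-th step of the complete flag spanned by an ordered basis. Unlike for `Basis.flag`, the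
index is a natural number, and the steps beyond the `n`-th are all equal to `⊤`. -/
def flagSpan (t : ℕ) (b : Basis (Fin n) F V) : Submodule F V :=
  Submodule.span F (b '' {i | i.val < t})

variable {b u v : Basis (Fin n) F V} {s t : ℕ}

theorem flagSpan_mono (b : Basis (Fin n) F V) : Monotone (flagSpan · b) :=
  fun _ _ hst => Submodule.span_mono (Set.image_mono fun _ hi => lt_of_lt_of_le hi hst)

theorem flagSpan_map (t : ℕ) (b : Basis (Fin n) F V) (e : V ≃ₗ[F] V) :
    flagSpan t (b.map e) = (flagSpan t b).map e.toLinearMap := by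
  rw [flagSpan, flagSpan, Submodule.map_span, ← Set.image_comp]
  rfl

theorem finrank_flagSpan (t : ℕ) (b : Basis (Fin n) F V) :
    finrank F (flagSpan t b) = min t n := by
  have hind : LinearIndependent F fun i : {i : Fin n // i.val < t} => b i :=
    b.linearIndependent.comp _ Subtype.val_injective
  rw [flagSpan, Set.image_eq_range, min_comm, ← Fin.card_filter_val_lt, ← Fintype.card_subtype]
  exact finrank_span_eq_card hind

theorem isChain_range_flagSpan (b : Basis (Fin n) F V) :
    IsChain (· ≤ ·) (Set.range (flagSpan · b)) :=
  (flagSpan_mono b).isChain_range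

theorem homogeneousCoords_flagSpan [Fintype (Basis (Fin n) F V)] :
    HomogeneousCoords (flagSpan : ℕ → Basis (Fin n) F V → Submodule F V) := by
  suffices ∀ B (u v : Basis (Fin n) F V), #(coordCell flagSpan B u) ≤ #(coordCell flagSpan B v) from
    fun B u v => (this B u v).antisymm (this B v u)
  intro B u v
  let e : V ≃ₗ[F] V := u.equiv v (Equiv.refl _)
  have map_u : u.map e = v := Basis.eq_of_apply_eq fun i => by simp [e]
  refine card_le_card_of_injOn (fun w => w.map e) (fun w hw => mem_coordCell.mpr fun t ht => ?_)
    fun w _ w' _ h => Basis.eq_of_apply_eq fun i => e.injective (DFunLike.congr_fun h i)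
  rw [flagSpan_map, mem_coordCell.mp hw t ht, ← flagSpan_map, map_u]

theorem exists_basis_mem_of_isChain [FiniteDimensional F V] (hn : finrank F V = n)
    {C : Set (Submodule F V)} (hC : IsChain (· ≤ ·) C) :
    ∃ b : Basis (Fin n) F V, ∀ W ∈ C, ∀ i, i.val < finrank F W → b i ∈ W := by
  suffices ∀ k ≤ n, ∃ x : Fin k → V, LinearIndependent F x ∧
      ∀ W ∈ C, ∀ i, i.val < finrank F W → x i ∈ W by
    obtain ⟨x, hx, hxC⟩ := this n le_rfl
    exact ⟨basisOfLinearIndependentOfCardEqFinrank' x hx (by simp [hn]), by simpa using hxC⟩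
  intro k hk
  induction k with
  | zero => exact ⟨Fin.elim0, linearIndependent_empty_type, fun _ _ i => i.elim0⟩
  | succ k ih =>
    obtain ⟨x, hx, hxC⟩ := ih (by omega)
    obtain ⟨y, hyC, hy⟩ : ∃ y, (∀ W ∈ C, k < finrank F W → y ∈ W) ∧
        y ∉ Submodule.span F (Set.range x) := by
      obtain ⟨W, ⟨hWC, hkW⟩, hWmin⟩ := exists_minimal_of_wellFoundedLT
        (fun W => W ∈ insert ⊤ C ∧ k < finrank F W) ⟨⊤, by simp, by rw [finrank_top]; omega⟩
      have not_le : ¬ W ≤ Submodule.span F (Set.range x) := fun h =>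
        ((Submodule.finrank_mono h).trans (finrank_range_le_card x)).not_gt (by simpa using hkW)
      obtain ⟨y, hyW, hy⟩ := SetLike.not_le_iff_exists.mp not_le
      have hC' : IsChain (· ≤ ·) (insert ⊤ C) := hC.insert fun _ _ _ => .inr le_top
      refine ⟨y, fun W' hW' hk => ?_, hy⟩
      obtain h | h := hC'.total hWC (.inr hW')
      · exact h hyW
      · exact hWmin ⟨.inr hW', hk⟩ h hyW
    refine ⟨Fin.snoc x y, linearIndependent_finSnoc.mpr ⟨hx, hy⟩, fun W hW i => ?_⟩
    induction i using Fin.lastCases with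
    | last => simpa using hyC W hW
    | cast i => simpa using hxC W hW i

theorem exists_basis_flagSpan_eq_of_isChain [FiniteDimensional F V] (hn : finrank F V = n)
    {C : Set (Submodule F V)} (hC : IsChain (· ≤ ·) C) :
    ∃ b : Basis (Fin n) F V, ∀ W ∈ C, ∀ t, finrank F W = min t n → flagSpan t b = W := by
  obtain ⟨b, hb⟩ := exists_basis_mem_of_isChain hn hC
  refine ⟨b, fun W hW t ht => Submodule.eq_of_le_of_finrank_eq ?_ (by rw [finrank_flagSpan, ht])⟩
  rw [flagSpan, Submodule.span_le, Set.image_subset_iff]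
  exact fun i hi => hb W hW i (ht ▸ lt_min hi i.isLt)

variable [Fintype (Basis (Fin n) F V)] [FiniteDimensional F V] {A A' : Submodule F V} {B : Finset ℕ}
  {a b c : ℕ}

theorem exists_mem_coordCell_flagSpan_eq (hA : finrank F A = min a n)
    (hA' : finrank F A' = min b n) (hAA' : A ≤ A')
    (hBA : ∀ t ∈ B, A ≤ flagSpan t v ∨ flagSpan t v ≤ A)
    (hBA' : ∀ t ∈ B, A' ≤ flagSpan t v ∨ flagSpan t v ≤ A') :
    ∃ w ∈ coordCell flagSpan B v, flagSpan a w = A ∧ flagSpan b w = A' := by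
  have hchain : IsChain (· ≤ ·) (insert A (insert A' ((flagSpan · v) '' B))) := by
    refine (((isChain_range_flagSpan v).mono (Set.image_subset_range ..)).insert ?_).insert ?_
    · exact Set.forall_mem_image.mpr fun t ht _ => hBA' t ht
    · exact Set.forall_mem_insert.mpr
        ⟨fun _ => .inl hAA', Set.forall_mem_image.mpr fun t ht _ => hBA t ht⟩
  have hn : finrank F V = n := by rw [finrank_eq_card_basis v, Fintype.card_fin]
  obtain ⟨w, hw⟩ := exists_basis_flagSpan_eq_of_isChain hn hchain
  refine ⟨w, mem_coordCell.mpr fun t ht => ?_, hw A (by simp) a hA, hw A' (by simp) b hA'⟩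
  exact hw _ (.inr (.inr ⟨t, ht, rfl⟩)) t (finrank_flagSpan t v)

theorem exists_flagSpan_exchange (hb : b ∈ B) (hab : a ≤ b) (hbc : b ≤ c)
    (hu : u ∈ coordCell flagSpan B v) :
    ∃ w ∈ coordCell flagSpan B v, flagSpan a w = flagSpan a u ∧ flagSpan c w = flagSpan c v := by
  have hu := mem_coordCell.mp hu
  refine exists_mem_coordCell_flagSpan_eq (finrank_flagSpan a u) (finrank_flagSpan c v) ?_
    (fun t ht => ?_) fun t _ => ?_
  · exact (flagSpan_mono u hab).trans ((hu b hb).trans_le (flagSpan_mono v hbc))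
  · rw [← hu t ht]
    exact (isChain_range_flagSpan u).total ⟨a, rfl⟩ ⟨t, rfl⟩
  · exact (isChain_range_flagSpan v).total ⟨c, rfl⟩ ⟨t, rfl⟩

theorem image_coordCell_flagSpan_eq_grassmannEdges [Fintype (Submodule F V)] (B : Finset ℕ)
    (v : Basis (Fin n) F V) (ha : a + 1 ≤ n) :
    (coordCell flagSpan B v).image (fun u => (flagSpan a u, flagSpan (a + 1) u)) =
      grassmannEdges ({t ∈ B | t ≤ a}.sup (flagSpan · v)) ({t ∈ B | a < t}.inf (flagSpan · v))
        a := by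
  set L := {t ∈ B | t ≤ a}.sup (flagSpan · v)
  set U := {t ∈ B | a < t}.inf (flagSpan · v)
  refine (image_subset_iff.mpr fun u hu => ?_).antisymm fun ⟨A, A'⟩ hA => ?_
  · have hu := mem_coordCell.mp hu
    have hL : L ≤ flagSpan a u := Finset.sup_le fun t ht => by
      rw [mem_filter] at ht
      exact (hu t ht.1).symm.trans_le (flagSpan_mono u ht.2)
    have hU : flagSpan (a + 1) u ≤ U := Finset.le_inf fun t ht => by
      rw [mem_filter] at ht
      exact (flagSpan_mono u ht.2).trans_eq (hu t ht.1)
    have hle : flagSpan a u ≤ flagSpan (a + 1) u := flagSpan_mono u (Nat.le_succ a)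
    simp only [grassmannEdges, mem_filter, mem_product, mem_grassmannian, finrank_flagSpan]
    exact ⟨⟨⟨hL, hle.trans hU, by omega⟩, hL.trans hle, hU, by omega⟩, hle⟩
  · obtain ⟨⟨⟨hLA, hAU, hAa⟩, hLA', hA'U, hA'a⟩, hAA'⟩ := by
      simpa only [grassmannEdges, mem_filter, mem_product, mem_grassmannian] using hA
    have comparable {t} (ht : t ∈ B) : U ≤ flagSpan t v ∨ flagSpan t v ≤ L :=
      (lt_or_ge a t).imp
        (fun h => Finset.inf_le (f := (flagSpan · v)) (mem_filter.mpr ⟨ht, h⟩))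
        fun h => Finset.le_sup (f := (flagSpan · v)) (mem_filter.mpr ⟨ht, h⟩)
    obtain ⟨w, hw, hwA, hwA'⟩ := exists_mem_coordCell_flagSpan_eq (a := a) (b := a + 1) (v := v)
      (by omega) (by omega) hAA' (fun t ht => (comparable ht).imp hAU.trans (·.trans hLA))
      fun t ht => (comparable ht).imp hA'U.trans (·.trans hLA')
    exact mem_image.mpr ⟨w, hw, Prod.ext hwA hwA'⟩

theorem expect_flagSpan_mul_le [Finite F] (v : Basis (Fin n) F V) (ha : a + 1 ≤ n)
    {φ : Submodule F V → ℝ} (hφ : 𝔼 u ∈ coordCell flagSpan B v, φ (flagSpan a u) = 0)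
    (ψ : Submodule F V → ℝ) :
    𝔼 u ∈ coordCell flagSpan B v, φ (flagSpan a u) * ψ (flagSpan (a + 1) u) ≤
      (√(Nat.card F))⁻¹ * (√(𝔼 u ∈ coordCell flagSpan B v, φ (flagSpan a u) ^ 2) *
        √(𝔼 u ∈ coordCell flagSpan B v, ψ (flagSpan (a + 1) u) ^ 2)) := by
  have := Module.finite_of_finite F (M := V)
  have := Fintype.ofFinite (Submodule F V)
  set L := {t ∈ B | t ≤ a}.sup (flagSpan · v)
  set U := {t ∈ B | a < t}.inf (flagSpan · v)
  have to_edges (h : Submodule F V × Submodule F V → ℝ) :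
      𝔼 u ∈ coordCell flagSpan B v, h (flagSpan a u, flagSpan (a + 1) u) =
        𝔼 p ∈ grassmannEdges L U a, h p := by
    rw [homogeneousCoords_flagSpan.expect_comp_coord_pair,
      image_coordCell_flagSpan_eq_grassmannEdges B v ha]
  have hL : finrank F L ≤ a := by
    refine (Submodule.finrank_mono (Finset.sup_le fun t ht => ?_)).trans_eq
      ((finrank_flagSpan a v).trans (min_eq_left (by omega)))
    exact flagSpan_mono v (mem_filter.mp ht).2
  have hU : a + 1 ≤ finrank F U := by
    refine ((finrank_flagSpan (a + 1) v).trans (min_eq_left ha)).symm.trans_le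
      (Submodule.finrank_mono (Finset.le_inf fun t ht => ?_))
    exact flagSpan_mono v (mem_filter.mp ht).2
  rw [to_edges fun p => φ p.1] at hφ
  rw [to_edges fun p => φ p.1 * ψ p.2, to_edges fun p => φ p.1 ^ 2, to_edges fun p => ψ p.2 ^ 2,
    expect_mul_le_iff]
  refine sum_grassmannEdges_mul_le (i := a - finrank F L) (j := finrank F U - (a + 1)) (by omega)
    (by omega) ?_ ψ
  rw [← card_mul_expect, hφ, mul_zero]

end FlagSpan

section FlagCorrelation

variable {F V : Type*} [Field F] [Finite F] [AddCommGroup V] [Module F V] [FiniteDimensional F V]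
  {n : ℕ} [Fintype (Basis (Fin n) F V)]

theorem correlationBound_flagSpan_succ {a : ℕ} (ha : a + 1 ≤ n) :
    CorrelationBound (coordFunctions (flagSpan : ℕ → Basis (Fin n) F V → Submodule F V))
      {a} {a + 1} (√(Nat.card F))⁻¹ := by
  intro B f hf hfB g hg _
  refine inner_le_of_forall_coordCell (X := flagSpan) B (by positivity) fun v => ?_
  obtain ⟨φ, hφ⟩ := exists_eq_comp_of_mem_coordFunctions hf v
  obtain ⟨ψ, hψ⟩ := exists_eq_comp_of_mem_coordFunctions hg v
  have hφ0 : 𝔼 u ∈ coordCell flagSpan B v, φ (flagSpan a u) = 0 := by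
    rw [← mem_orthogonal_coordFunctions.mp hfB v]
    exact expect_congr rfl fun u hu => (hφ u hu).symm
  rw [expect_congr rfl fun u hu => by rw [hφ u hu, hψ u hu],
    expect_congr (f := fun u => f u ^ 2) rfl fun u hu => by rw [hφ u hu],
    expect_congr (f := fun u => g u ^ 2) rfl fun u hu => by rw [hψ u hu]]
  exact expect_flagSpan_mul_le v ha hφ0 ψ

theorem correlationBound_flagSpan_of_lt {a b : ℕ} (hab : a < b) (hb : b ≤ n) :
    CorrelationBound (coordFunctions (flagSpan : ℕ → Basis (Fin n) F V → Submodule F V))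
      {a} {b} (√(Nat.card F))⁻¹ :=
  (correlationBound_flagSpan_succ (by omega)).of_condIndep coordFunctions_mono (by positivity)
    fun _ hB _ hf hfB _ hg => homogeneousCoords_flagSpan.inner_eq_zero_of_exchange
      (fun _ _ hu => exists_flagSpan_exchange hB (Nat.le_succ a) hab hu) hf hfB hg

theorem correlationBound_flagSpan {c c' : Finset ℕ} (hc : ∀ t ∈ c, t ≤ n) (hc' : ∀ t ∈ c', t ≤ n)
    (hcc' : Disjoint c c') :
    CorrelationBound (coordFunctions (flagSpan : ℕ → Basis (Fin n) F V → Submodule F V))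
      c c' (√(#c) * (√(#c') * (√(Nat.card F))⁻¹)) := by
  refine .of_forall coordFunctions_mono (by positivity) fun a ha b hb => ?_
  obtain h | h := (disjoint_iff_ne.mp hcc' a ha b hb).lt_or_gt
  · exact correlationBound_flagSpan_of_lt h (hc' b hb)
  · exact (correlationBound_flagSpan_of_lt h (hc a ha)).symm

end FlagCorrelation

section PairAverages

variable {κ Ω : Type*} [DecidableEq κ] {R : Finset κ} {C : Finset Ω}

theorem sum_sum_erase_mul (R : Finset κ) (a : κ → ℝ) :
    ∑ c ∈ R, ∑ c' ∈ R.erase c, a c * a c' = (∑ c ∈ R, a c) ^ 2 - ∑ c ∈ R, a c ^ 2 := by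
  rw [sq, sum_mul_sum, ← sum_sub_distrib]
  exact sum_congr rfl fun c hc => by rw [← sum_erase_add _ _ hc, sq, add_sub_cancel_right]

theorem sum_sum_erase_add (R : Finset κ) (a : κ → ℝ) :
    ∑ c ∈ R, ∑ c' ∈ R.erase c, (a c + a c') = 2 * (#R - 1) * ∑ c ∈ R, a c := by
  have inner_sum : ∀ c ∈ R, ∑ c' ∈ R.erase c, (a c + a c') = (#R - 2) * a c + ∑ c' ∈ R, a c' := by
    intro c hc
    rw [sum_add_distrib, sum_const, nsmul_eq_mul, cast_card_erase_of_mem hc, ← sum_erase_add R a hc]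
    ring
  rw [sum_congr rfl inner_sum, sum_add_distrib, ← mul_sum, sum_const, nsmul_eq_mul]
  ring

theorem expect_mul_eq_add_covariance (hC : C.Nonempty) (f g : Ω → ℝ) :
    𝔼 u ∈ C, f u * g u = (𝔼 u ∈ C, f u) * (𝔼 u ∈ C, g u) +
      𝔼 u ∈ C, (f u - 𝔼 w ∈ C, f w) * (g u - 𝔼 w ∈ C, g w) := by
  simp only [sub_mul, mul_sub, expect_sub_distrib, ← expect_mul, ← mul_expect, expect_const hC]
  ring

/-- The means cancel up to `-∑ (𝔼 Y c) ^ 2 ≤ 0`, so only the covariances contribute. -/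
theorem sum_sum_erase_expect_mul_le {Y : κ → Ω → ℝ} {ε : ℝ} (hε : 0 ≤ ε) (hR : 1 ≤ #R)
    (hmean : ∑ c ∈ R, 𝔼 u ∈ C, Y c u = 0)
    (hcov : ∀ c ∈ R, ∀ c' ∈ R, c ≠ c' →
      𝔼 u ∈ C, (Y c u - 𝔼 w ∈ C, Y c w) * (Y c' u - 𝔼 w ∈ C, Y c' w) ≤
        ε * (√(𝔼 u ∈ C, (Y c u - 𝔼 w ∈ C, Y c w) ^ 2) *
          √(𝔼 u ∈ C, (Y c' u - 𝔼 w ∈ C, Y c' w) ^ 2))) :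
    ∑ c ∈ R, ∑ c' ∈ R.erase c, 𝔼 u ∈ C, Y c u * Y c' u ≤
      ε * ((#R - 1) * ∑ c ∈ R, 𝔼 u ∈ C, Y c u ^ 2) := by
  obtain rfl | hC := C.eq_empty_or_nonempty
  · simp
  set μ : κ → ℝ := fun c => 𝔼 u ∈ C, Y c u
  set V : κ → ℝ := fun c => 𝔼 u ∈ C, (Y c u - μ c) ^ 2
  have V_nonneg (c) : 0 ≤ V c := expect_nonneg fun u _ => sq_nonneg _
  have V_le (c) : V c ≤ 𝔼 u ∈ C, Y c u ^ 2 := by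
    have := expect_mul_eq_add_covariance hC (Y c) (Y c)
    simp only [← sq] at this
    linarith [sq_nonneg (μ c)]
  have pair_le : ∀ c ∈ R, ∀ c' ∈ R.erase c,
      𝔼 u ∈ C, Y c u * Y c' u ≤ μ c * μ c' + ε / 2 * (V c + V c') := by
    intro c hc c' hc'
    rw [expect_mul_eq_add_covariance hC]
    have am_gm : √(V c) * √(V c') ≤ (V c + V c') / 2 := by
      linarith [two_mul_le_add_sq (√(V c)) (√(V c')), Real.sq_sqrt (V_nonneg c),
        Real.sq_sqrt (V_nonneg c')]
    have := hcov c hc c' (mem_of_mem_erase hc') (ne_of_mem_erase hc').symm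
    linarith [mul_le_mul_of_nonneg_left am_gm hε]
  have hR' : (0 : ℝ) ≤ #R - 1 := sub_nonneg.mpr (Nat.one_le_cast.mpr hR)
  calc ∑ c ∈ R, ∑ c' ∈ R.erase c, 𝔼 u ∈ C, Y c u * Y c' u
      ≤ ∑ c ∈ R, ∑ c' ∈ R.erase c, (μ c * μ c' + ε / 2 * (V c + V c')) :=
        sum_le_sum fun c hc => sum_le_sum (pair_le c hc)
    _ = ε * ((#R - 1) * ∑ c ∈ R, V c) - ∑ c ∈ R, μ c ^ 2 := by
        rw [sum_congr rfl fun c _ => sum_add_distrib, sum_add_distrib, sum_sum_erase_mul, hmean,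
          sum_congr rfl fun c _ => (mul_sum ..).symm, ← mul_sum, sum_sum_erase_add]
        ring
    _ ≤ ε * ((#R - 1) * ∑ c ∈ R, V c) := sub_le_self _ (sum_nonneg fun c _ => sq_nonneg _)
    _ ≤ ε * ((#R - 1) * ∑ c ∈ R, 𝔼 u ∈ C, Y c u ^ 2) := by gcongr with c; exact V_le c

end PairAverages

section FlagOf

variable {F V : Type*} [Field F] [AddCommGroup V] [Module F V] {n : ℕ} {S : Finset ℕ}
  {u v b : Basis (Fin n) F V} {W : Submodule F V}

/-- The partial flag of an ordered basis that keeps the steps of the complete flag with dimensions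
in `S`. It is the face of the flags complex that the basis represents. -/
noncomputable def flagOf (S : Finset ℕ) (b : Basis (Fin n) F V) : Finset (Submodule F V) :=
  S.image (flagSpan · b)

theorem mem_flagOf (hS : ∀ t ∈ S, t ≤ n) :
    W ∈ flagOf S b ↔ finrank F W ∈ S ∧ flagSpan (finrank F W) b = W := by
  refine ⟨fun hW => ?_, fun hW => mem_image.mpr ⟨_, hW⟩⟩
  obtain ⟨t, ht, rfl⟩ := mem_image.mp hW
  rw [finrank_flagSpan, min_eq_left (hS t ht)]
  exact ⟨ht, rfl⟩

theorem flagOf_eq_flagOf_iff (hS : ∀ t ∈ S, t ≤ n) :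
    flagOf S u = flagOf S v ↔ ∀ t ∈ S, flagSpan t u = flagSpan t v := by
  refine ⟨fun h t ht => ?_, fun h => image_congr h⟩
  have hu : flagSpan t u ∈ flagOf S v := h ▸ mem_image_of_mem (flagSpan · u) ht
  simpa only [finrank_flagSpan, min_eq_left (hS t ht)] using ((mem_flagOf hS).mp hu).2.symm

/-- The dimensions of all subspaces occurring in the blocks of `σ`. These are the coordinates of a
random flag that conditioning on `σ` fixes. -/
noncomputable def blockDims (σ : Finset (Finset (Submodule F V))) : Finset ℕ :=
  (σ.biUnion id).image fun W : Submodule F V => finrank F W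

theorem forall_mem_blockDims {σ : Finset (Finset (Submodule F V))} {p : ℕ → Prop} :
    (∀ t ∈ blockDims σ, p t) ↔ ∀ s ∈ σ, ∀ W ∈ s, p (finrank F W) := by
  simp only [blockDims, forall_mem_image, mem_biUnion, id]
  exact ⟨fun h s hs W hW => h ⟨s, hs, hW⟩, fun h W ⟨s, hs, hW⟩ => h s hs W hW⟩

end FlagOf

section FlagFaces

variable {F : Type} [Field F] [Fintype F] {d : ℕ} {S c : Finset ℕ}
  {T : Finset (Submodule F (Fin d → F))}

theorem isMaxFlagFace_iff_exists_flagOf_eq (hS : ∀ t ∈ S, t ≤ d) :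
    IsMaxFlagFace F d S T ↔ ∃ b : Basis (Fin d) F (Fin d → F), flagOf S b = T := by
  constructor
  · rintro ⟨⟨hchain, hdim⟩, hmax⟩
    obtain ⟨b, hb⟩ := exists_basis_flagSpan_eq_of_isChain (finrank_fin_fun F) hchain
    have flagSpan_eq {W} (hW : W ∈ T) : flagSpan (finrank F W) b = W :=
      hb W hW _ (min_eq_left (hS _ (hdim W hW))).symm
    refine ⟨b, ext fun W => ⟨fun hW => ?_, fun hW => ?_⟩⟩
    · obtain ⟨hWS, hWb⟩ := (mem_flagOf hS).mp hW
      obtain ⟨W', hW', hWW'⟩ := hmax _ hWS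
      rwa [← hWb, ← hWW', flagSpan_eq hW']
    · exact (mem_flagOf hS).mpr ⟨hdim W hW, flagSpan_eq hW⟩
  · rintro ⟨b, rfl⟩
    refine ⟨⟨(isChain_range_flagSpan b).mono ?_, fun W hW => ((mem_flagOf hS).mp hW).1⟩,
      fun t ht => ⟨flagSpan t b, mem_image_of_mem _ ht, ?_⟩⟩
    · rw [flagOf, coe_image]
      exact Set.image_subset_range _ _
    · rw [finrank_flagSpan, min_eq_left (hS t ht)]

theorem blockOf_flagOf (hS : ∀ t ∈ S, t ≤ d) (hc : c ⊆ S) (b : Basis (Fin d) F (Fin d → F)) :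
    blockOf F d (flagOf S b) c = flagOf c b := by
  ext W
  have := @hc (finrank F W)
  rw [blockOf, mem_filter, mem_flagOf hS, mem_flagOf fun t ht => hS t (hc ht)]
  tauto

variable {σ : Finset (Finset (Submodule F (Fin d → F)))}

theorem exists_flagOf_mem_topsAboveBlocks (hS : ∀ t ∈ S, t ≤ d)
    (hσ : IsFlagFace F d S (σ.biUnion id)) :
    ∃ v : Basis (Fin d) F (Fin d → F), flagOf S v ∈ topsAboveBlocks F d S σ := by
  obtain ⟨hchain, hdim⟩ := hσ
  obtain ⟨v, hv⟩ := exists_basis_flagSpan_eq_of_isChain (finrank_fin_fun F) hchain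
  refine ⟨v, mem_filter.mpr ⟨mem_univ _, (isMaxFlagFace_iff_exists_flagOf_eq hS).mpr ⟨v, rfl⟩,
    fun s hs W hW => ?_⟩⟩
  have hWσ : W ∈ σ.biUnion id := mem_biUnion.mpr ⟨s, hs, hW⟩
  exact (mem_flagOf hS).mpr
    ⟨hdim W hWσ, hv W hWσ _ (min_eq_left (hS _ (hdim W hWσ))).symm⟩

variable [Fintype (Basis (Fin d) F (Fin d → F))] {J : Finset (Finset ℕ)}
  {v : Basis (Fin d) F (Fin d → F)}

theorem topsAboveBlocks_eq_image_coordCell (hS : ∀ t ∈ S, t ≤ d)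
    (hv : flagOf S v ∈ topsAboveBlocks F d S σ) :
    topsAboveBlocks F d S σ =
      (coordCell flagSpan (blockDims σ) v).image (flagOf S) := by
  have hσv : ∀ s ∈ σ, ∀ W ∈ s, finrank F W ∈ S ∧ flagSpan (finrank F W) v = W := fun s hs W hW =>
    (mem_flagOf hS).mp ((mem_filter.mp hv).2.2 s hs hW)
  have above_iff (u : Basis (Fin d) F (Fin d → F)) : (∀ s ∈ σ, s ⊆ flagOf S u) ↔
      u ∈ coordCell flagSpan (blockDims σ) v := by
    rw [mem_coordCell, forall_mem_blockDims]
    refine forall₂_congr fun s hs => forall₂_congr fun W hW => ?_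
    rw [mem_flagOf hS, (hσv s hs W hW).2, and_iff_right (hσv s hs W hW).1]
  ext T
  simp only [topsAboveBlocks, mem_filter_univ, isMaxFlagFace_iff_exists_flagOf_eq hS, mem_image,
    ← above_iff]
  grind

theorem expect_topsAboveBlocks (hS : ∀ t ∈ S, t ≤ d) (hv : flagOf S v ∈ topsAboveBlocks F d S σ)
    (h : Finset (Submodule F (Fin d → F)) → ℝ) :
    𝔼 T ∈ topsAboveBlocks F d S σ, h T =
      𝔼 u ∈ coordCell flagSpan (blockDims σ) v, h (flagOf S u) := by
  rw [topsAboveBlocks_eq_image_coordCell hS hv]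
  exact (homogeneousCoords_flagSpan.expect_comp _ v S (fun _ _ => flagOf_eq_flagOf_iff hS) h).symm

theorem facesVertExp_eq_sum_expect (hS : ∀ t ∈ S, t ≤ d) (hJ : ∀ c ∈ J, c ⊆ S)
    (hv : flagOf S v ∈ topsAboveBlocks F d S σ) (f : Finset (Submodule F (Fin d → F)) → ℝ) :
    facesVertExp F d S J σ f = (∑ c ∈ remColors F d J σ,
      𝔼 u ∈ coordCell flagSpan (blockDims σ) v, f (flagOf c u)) /
        #(remColors F d J σ) := by
  rw [facesVertExp, ← expect_eq_sum_div_card, ← expect_div, expect_sum_comm]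
  congr 1
  refine sum_congr rfl fun c hc => ?_
  rw [expect_topsAboveBlocks hS hv]
  simp only [blockOf_flagOf hS (hJ c (mem_sdiff.mp hc).1)]

theorem facesPairExp_eq_sum_expect (hS : ∀ t ∈ S, t ≤ d) (hJ : ∀ c ∈ J, c ⊆ S)
    (hv : flagOf S v ∈ topsAboveBlocks F d S σ) (f g : Finset (Submodule F (Fin d → F)) → ℝ) :
    facesPairExp F d S J σ f g =
      (∑ c ∈ remColors F d J σ, ∑ c' ∈ (remColors F d J σ).erase c,
        𝔼 u ∈ coordCell flagSpan (blockDims σ) v,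
          f (flagOf c u) * g (flagOf c' u)) /
        (#(remColors F d J σ) * (#(remColors F d J σ) - 1)) := by
  rw [facesPairExp, ← expect_eq_sum_div_card, ← expect_div, expect_sum_comm]
  simp only [expect_sum_comm]
  congr 1
  refine sum_congr rfl fun c hc => sum_congr rfl fun c' hc' => ?_
  rw [expect_topsAboveBlocks hS hv]
  simp only [blockOf_flagOf hS (hJ c (mem_sdiff.mp hc).1),
    blockOf_flagOf hS (hJ c' (mem_sdiff.mp (mem_of_mem_erase hc')).1)]

end FlagFaces

section Expansion

variable {F : Type} [Field F] [Fintype F] {d : ℕ} {S : Finset ℕ} {J : Finset (Finset ℕ)}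
  {σ : Finset (Finset (Submodule F (Fin d → F)))}

theorem card_le_card_remColors_add (J : Finset (Finset ℕ))
    (σ : Finset (Finset (Submodule F (Fin d → F)))) : #J ≤ #(remColors F d J σ) + #σ := by
  have := le_card_sdiff (σ.image fun s => s.image fun W : Submodule F (Fin d → F) => finrank F W) J
  rw [remColors]
  have := card_image_le (s := σ)
    (f := fun s => s.image fun W : Submodule F (Fin d → F) => finrank F W)
  omega

theorem facesVertExp_nonneg {f : Finset (Submodule F (Fin d → F)) → ℝ} (hf : 0 ≤ f) :
    0 ≤ facesVertExp F d S J σ f :=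
  div_nonneg (sum_nonneg fun _ _ => div_nonneg (sum_nonneg fun _ _ => hf _) (Nat.cast_nonneg _))
    (Nat.cast_nonneg _)

theorem covariance_flagOf_le [Fintype (Basis (Fin d) F (Fin d → F))] {k : ℕ} {c c' B : Finset ℕ}
    (hc : ∀ t ∈ c, t ≤ d) (hc' : ∀ t ∈ c', t ≤ d) (hcc' : Disjoint c c') (hck : #c ≤ k)
    (hck' : #c' ≤ k) (v : Basis (Fin d) F (Fin d → F))
    (f g : Finset (Submodule F (Fin d → F)) → ℝ) :
    𝔼 u ∈ coordCell flagSpan B v, (f (flagOf c u) - 𝔼 w ∈ coordCell flagSpan B v, f (flagOf c w)) *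
        (g (flagOf c' u) - 𝔼 w ∈ coordCell flagSpan B v, g (flagOf c' w)) ≤
      k / √(Fintype.card F) *
        (√(𝔼 u ∈ coordCell flagSpan B v,
            (f (flagOf c u) - 𝔼 w ∈ coordCell flagSpan B v, f (flagOf c w)) ^ 2) *
          √(𝔼 u ∈ coordCell flagSpan B v,
            (g (flagOf c' u) - 𝔼 w ∈ coordCell flagSpan B v, g (flagOf c' w)) ^ 2)) := by
  have centered (h : Basis (Fin d) F (Fin d → F) → ℝ) :
      𝔼 u ∈ coordCell flagSpan B v, (h u - 𝔼 w ∈ coordCell flagSpan B v, h w) = 0 := by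
    rw [expect_sub_distrib, expect_const ⟨v, mem_coordCell_self B v⟩, sub_self]
  refine ((correlationBound_flagSpan hc hc' hcc').expect_coordCell_le (fun u w huw => ?_)
    (fun u w huw => ?_) (centered _) (centered _)).trans ?_
  · rw [(flagOf_eq_flagOf_iff hc).mpr huw]
  · rw [(flagOf_eq_flagOf_iff hc').mpr huw]
  gcongr
  calc √(#c) * (√(#c') * (√(Nat.card F))⁻¹)
      ≤ √k * (√k * (√(Nat.card F))⁻¹) := by gcongr
    _ = k / √(Fintype.card F) := by
        rw [← mul_assoc, Real.mul_self_sqrt (Nat.cast_nonneg _), Nat.card_eq_fintype_card,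
          div_eq_mul_inv]

theorem stmt_15_general {k : ℕ} (hS : ∀ t ∈ S, t ≤ d) (hJk : ∀ c ∈ J, #c ≤ k)
    (hJS : ∀ c ∈ J, c ⊆ S) (hJ : ∀ c ∈ J, ∀ c' ∈ J, c ≠ c' → Disjoint c c')
    (hσ : IsFlagFace F d S (σ.biUnion id)) (hσcard : #σ + 2 ≤ #J)
    {f : Finset (Submodule F (Fin d → F)) → ℝ} (hmean : facesVertExp F d S J σ f = 0) :
    facesPairExp F d S J σ f f ≤
      k / √(Fintype.card F) * facesVertExp F d S J σ fun b => f b ^ 2 := by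
  obtain ⟨v, hv⟩ := exists_flagOf_mem_topsAboveBlocks hS hσ
  have : Finite (Basis (Fin d) F (Fin d → F)) := DFunLike.finite _
  have := Fintype.ofFinite (Basis (Fin d) F (Fin d → F))
  have hR : 2 ≤ #(remColors F d J σ) := by
    have := card_le_card_remColors_add J σ
    omega
  have hR' : (2 : ℝ) ≤ #(remColors F d J σ) := Nat.ofNat_le_cast.mpr hR
  have mem_J {c} (hc : c ∈ remColors F d J σ) : c ∈ J := (mem_sdiff.mp hc).1
  have dim_le {c} (hc : c ∈ J) : ∀ t ∈ c, t ≤ d := fun t ht => hS t (hJS c hc ht)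
  rw [facesVertExp_eq_sum_expect hS hJS hv, div_eq_zero_iff] at hmean
  have pair_sum_le := sum_sum_erase_expect_mul_le (ε := k / √(Fintype.card F))
    (Y := fun c u => f (flagOf c u)) (by positivity) (by omega)
    (hmean.resolve_right (by positivity)) fun c hc c' hc' hne =>
      covariance_flagOf_le (dim_le (mem_J hc)) (dim_le (mem_J hc'))
        (hJ c (mem_J hc) c' (mem_J hc') hne) (hJk c (mem_J hc)) (hJk c' (mem_J hc')) v f f
  rw [facesPairExp_eq_sum_expect hS hJS hv, facesVertExp_eq_sum_expect hS hJS hv,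
    div_le_iff₀ (mul_pos (by linarith) (by linarith))]
  refine pair_sum_le.trans_eq ?_
  field_simp

end Expansion

/-- The colored faces complex `F^J(B(d,S,q))` is a one-sided local
spectral expander with parameter `λ′ = 2(r+1)/(√q - 1 - 2(|S|-r))`, stated in
Rayleigh-quotient form for the link of each face `σ` with `|σ| ≤ m - 2`. -/
theorem stmt_15 (q : ℕ) (hq : IsPrimePow q)
    (F : Type) [Field F] [Fintype F] (hF : Fintype.card F = q)
    (d : ℕ) (hd : 3 ≤ d)
    (S : Finset ℕ) (hS : S ⊆ Finset.Icc 1 (d - 1)) (hScard : 2 ≤ S.card)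
    (r : ℕ) (hr : 2 * r + 2 ≤ S.card)
    (hq' : 0 < Real.sqrt (q : ℝ) - 1 - 2 * ((S.card : ℝ) - (r : ℝ)))
    (J : Finset (Finset ℕ)) (m : ℕ) (hm : J.card = m) (hm2 : 2 ≤ m)
    (hJsize : ∀ c ∈ J, c.card = r + 1)
    (hJS : ∀ c ∈ J, c ⊆ S)
    (hJdisj : ∀ c ∈ J, ∀ c' ∈ J, c ≠ c' → Disjoint c c')
    (σ : Finset (Finset (Submodule F (Fin d → F))))
    (hσface : ∀ s ∈ σ, IsChain (· ≤ ·) (s : Set (Submodule F (Fin d → F))))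
    (hσJ : ∀ s ∈ σ, s.image (fun W : Submodule F (Fin d → F) => Module.finrank F W) ∈ J)
    (hσinj : ∀ s ∈ σ, ∀ s' ∈ σ,
      s ≠ s' → s.image (fun W : Submodule F (Fin d → F) => Module.finrank F W) ≠
        s'.image (fun W : Submodule F (Fin d → F) => Module.finrank F W))
    (hσunion : IsFlagFace F d S (σ.biUnion id))
    (hσcard : σ.card + 2 ≤ m)
    (f : Finset (Submodule F (Fin d → F)) → ℝ)
    (hmean : facesVertExp F d S J σ f = 0) :
    facesPairExp F d S J σ f f ≤
      (2 * ((r : ℝ) + 1) / (Real.sqrt (q : ℝ) - 1 - 2 * ((S.card : ℝ) - (r : ℝ)))) *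
        facesVertExp F d S J σ (fun b => (f b) ^ 2) := by
  subst hF hm
  have dim_le : ∀ t ∈ S, t ≤ d := fun t ht => (mem_Icc.mp (hS ht)).2.trans (Nat.sub_le d 1)
  have const_le : ((r + 1 : ℕ) : ℝ) / √(Fintype.card F) ≤
      2 * ((r : ℝ) + 1) / (√(Fintype.card F) - 1 - 2 * ((#S : ℝ) - r)) := by
    have hrS : (r : ℝ) ≤ #S := Nat.cast_le.mpr (by omega)
    push_cast
    exact div_le_div₀ (by positivity) (by linarith) hq' (by linarith)
  exact (stmt_15_general dim_le (fun c hc => (hJsize c hc).le) hJS hJdisj hσunion hσcard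
    hmean).trans (mul_le_mul_of_nonneg_right const_le (facesVertExp_nonneg fun _ => sq_nonneg _))
end
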